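/- arXiv:2411.07051 — 2 statements merged into one kernel-verified Lean document; each statement's English description precedes it below -/
import Mathlib

section
/- The Wasserstein space 𝒲_1(Q) over Q = [−1,1]² with the maximum metric is diagonally rigid: for every isometry Φ : 𝒲_1(Q) → 𝒲_1(Q) there exists an isometry T of (Q, d_m) such that (Φ ∘ T_#)(μ) = μ for every μ ∈ 𝒲_1(Q) whose support is contained in L₊ = {(t,t) : t ∈ [−1,1]} or in L₋ = {(t,−t) : t ∈ [−1,1]}. -/
open MeasureTheory

/-- The `p`-Wasserstein distance between two measures, defined as the infimum over all
couplings `π` of `μ` and `ν` of `(∬ d(x,y)^p dπ)^(1/p)`. -/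
noncomputable def Wdist {X : Type*} [MeasurableSpace X] [PseudoMetricSpace X] (p : ℝ)
    (μ ν : Measure X) : ℝ :=
  (⨅ π ∈ {π : Measure (X × X) | π.map Prod.fst = μ ∧ π.map Prod.snd = ν},
    (∫⁻ q, edist q.1 q.2 ^ p ∂π) ^ (1 / p)).toReal

/-- The `p`-Wasserstein space over `X`: Borel probability measures on `X` with finite
`p`-th moment. -/
def WSet (X : Type*) [MeasurableSpace X] [PseudoMetricSpace X] (p : ℝ) : Set (Measure X) :=
  {μ | IsProbabilityMeasure μ ∧ ∃ x₀ : X, ∫⁻ x, edist x x₀ ^ p ∂μ < ⊤}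

/-- An isometry of the underlying metric space: a distance-preserving bijection. -/
def IsIsom {X : Type*} [PseudoMetricSpace X] (T : X → X) : Prop :=
  Function.Bijective T ∧ ∀ x y, dist (T x) (T y) = dist x y

/-- An isometry of the `p`-Wasserstein space over `X`: a bijection of the space of
probability measures with finite `p`-th moment preserving the Wasserstein distance. -/
def IsWIsometry (X : Type*) [MeasurableSpace X] [PseudoMetricSpace X] (p : ℝ)
    (Φ : Measure X → Measure X) : Prop :=
  Set.BijOn Φ (WSet X p) (WSet X p) ∧
    ∀ μ ∈ WSet X p, ∀ ν ∈ WSet X p, Wdist p (Φ μ) (Φ ν) = Wdist p μ ν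

/-- The (topological) support of a measure. -/
def msupport {X : Type*} [TopologicalSpace X] [MeasurableSpace X] (μ : Measure X) : Set X :=
  {x | ∀ U : Set X, IsOpen U → x ∈ U → μ U ≠ 0}

def diagLine (ε a : ℝ) : Set (ℝ × ℝ) := {z | z.2 = ε * z.1 + a}

def Lplus : Set (ℝ × ℝ) := {z | z.2 = z.1}

def Lminus : Set (ℝ × ℝ) := {z | z.2 = -z.1}

/-- The closed square `Q = [-1,1]²`. -/
abbrev Qs : Set (ℝ × ℝ) := Set.Icc (-1, -1) (1, 1)

def LplusQ : Set ↥Qs := {q | (q : ℝ × ℝ).2 = (q : ℝ × ℝ).1}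

def LminusQ : Set ↥Qs := {q | (q : ℝ × ℝ).2 = -(q : ℝ × ℝ).1}


namespace DR

abbrev X := ↥Qs

lemma integ (μ : Measure X) [IsFiniteMeasure μ] {f : X → ℝ} (hf : Continuous f) :
    Integrable f μ :=
  hf.integrable_of_hasCompactSupport (HasCompactSupport.of_compactSpace f)

lemma integ2 (μ : Measure (X × X)) [IsFiniteMeasure μ] {f : X × X → ℝ} (hf : Continuous f) :
    Integrable f μ :=
  hf.integrable_of_hasCompactSupport (HasCompactSupport.of_compactSpace f)

lemma b1 (x : X) : -1 ≤ x.1.1 ∧ x.1.1 ≤ 1 ∧ -1 ≤ x.1.2 ∧ x.1.2 ≤ 1 := by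
  obtain ⟨⟨a, b⟩, h⟩ := x
  simp only [Set.mem_Icc, Prod.mk_le_mk] at h
  exact ⟨h.1.1, h.2.1, h.1.2, h.2.2⟩

lemma distX (x y : X) : dist x y = max |x.1.1 - y.1.1| |x.1.2 - y.1.2| := by
  rw [Subtype.dist_eq, Prod.dist_eq, Real.dist_eq, Real.dist_eq]

lemma dist_le_two (x y : X) : dist x y ≤ 2 := by
  rw [distX]
  obtain ⟨h1, h2, h3, h4⟩ := b1 x
  obtain ⟨k1, k2, k3, k4⟩ := b1 y
  apply max_le <;> rw [abs_le] <;> constructor <;> linarith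

lemma mem_WSet {μ : Measure X} (h : IsProbabilityMeasure μ) : μ ∈ WSet X 1 := by
  refine ⟨h, ⟨(0, 0), by simp [Prod.le_def]⟩, ?_⟩
  refine lt_of_le_of_lt (lintegral_mono (g := fun _ => ENNReal.ofReal 2) ?_) ?_
  · intro x
    simp only [ENNReal.rpow_one]
    rw [edist_dist]
    exact ENNReal.ofReal_le_ofReal (dist_le_two _ _)
  · simp

lemma coupling_prob {μ : Measure X} [IsProbabilityMeasure μ] {π : Measure (X × X)}
    (h1 : π.map Prod.fst = μ) : IsProbabilityMeasure π := by
  constructor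
  have := congrArg (fun m => m Set.univ) h1
  simpa [Measure.map_apply measurable_fst] using this

lemma lint_eq (π : Measure (X × X)) [IsProbabilityMeasure π] :
    (∫⁻ q, edist q.1 q.2 ^ (1:ℝ) ∂π) ^ (1 / (1:ℝ)) = ENNReal.ofReal (∫ q, dist q.1 q.2 ∂π) := by
  rw [ofReal_integral_eq_lintegral_ofReal (integ2 π (by fun_prop))
    (Filter.Eventually.of_forall fun q => dist_nonneg)]
  simp [edist_dist]

lemma W_le {μ ν : Measure X} [IsProbabilityMeasure μ] {π : Measure (X × X)}
    (h1 : π.map Prod.fst = μ) (h2 : π.map Prod.snd = ν) :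
    Wdist 1 μ ν ≤ ∫ q, dist q.1 q.2 ∂π := by
  have := coupling_prob h1
  unfold Wdist
  apply ENNReal.toReal_le_of_le_ofReal (integral_nonneg fun q => dist_nonneg)
  rw [← lint_eq]
  exact iInf₂_le π ⟨h1, h2⟩

lemma le_W {μ ν : Measure X} [IsProbabilityMeasure μ] [IsProbabilityMeasure ν] {C : ℝ}
    (h : ∀ π : Measure (X × X), π.map Prod.fst = μ → π.map Prod.snd = ν →
      C ≤ ∫ q, dist q.1 q.2 ∂π) : C ≤ Wdist 1 μ ν := by
  unfold Wdist
  rw [← ENNReal.ofReal_le_iff_le_toReal]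
  · refine le_iInf₂ fun π hπ => ?_
    have := coupling_prob hπ.1
    rw [lint_eq]
    exact ENNReal.ofReal_le_ofReal (h π hπ.1 hπ.2)
  · apply ne_top_of_le_ne_top _ (iInf₂_le (μ.prod ν) ⟨by simp, by simp⟩)
    rw [lint_eq]
    exact ENNReal.ofReal_ne_top

lemma lip_le_W {μ ν : Measure X} [IsProbabilityMeasure μ] [IsProbabilityMeasure ν]
    {f : X → ℝ} (hc : Continuous f) (hf : ∀ x y, f x - f y ≤ dist x y) :
    ∫ x, f x ∂μ - ∫ x, f x ∂ν ≤ Wdist 1 μ ν := by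
  apply le_W
  intro π h1 h2
  have := coupling_prob h1
  rw [← h1, ← h2, integral_map (by fun_prop) hc.aestronglyMeasurable,
    integral_map (by fun_prop) hc.aestronglyMeasurable, ← integral_sub]
  · apply integral_mono
    · exact integ2 π (by fun_prop)
    · exact integ2 π (by fun_prop)
    · exact fun q => hf _ _
  · exact integ2 π (by fun_prop)
  · exact integ2 π (by fun_prop)

lemma W_map_le {μ : Measure X} [IsProbabilityMeasure μ] {G : X → X} (hG : Measurable G) :
    Wdist 1 μ (μ.map G) ≤ ∫ x, dist x (G x) ∂μ := by
  have hm : Measurable fun x => (x, G x) := by fun_prop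
  have := W_le (μ := μ) (ν := μ.map G) (π := μ.map fun x => (x, G x))
    (by rw [Measure.map_map measurable_fst hm]; exact Measure.map_id)
    (by rw [Measure.map_map measurable_snd hm]; rfl)
  rwa [integral_map hm.aemeasurable
    (Continuous.aestronglyMeasurable (f := fun q : X × X => dist q.1 q.2) (by fun_prop))] at this

lemma W_dirac (μ : Measure X) [IsProbabilityMeasure μ] (y : X) :
    Wdist 1 μ (Measure.dirac y) = ∫ x, dist x y ∂μ := by
  apply le_antisymm
  · have := W_map_le (μ := μ) (G := fun _ => y) measurable_const
    simpa [Measure.map_const] using this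
  · have := lip_le_W (μ := μ) (ν := Measure.dirac y) (f := fun x => dist x y) (by fun_prop)
      (fun a b => by linarith [dist_triangle a b y])
    simpa using this

lemma W_dd (x y : X) : Wdist 1 (Measure.dirac x) (Measure.dirac y) = dist x y := by
  rw [W_dirac]; simp

lemma W_two {μ ν : Measure X} [IsProbabilityMeasure μ] [IsProbabilityMeasure ν]
    (h : Wdist 1 μ ν = 2) : ∀ᵐ x ∂μ, ∀ᵐ y ∂ν, dist x y = 2 := by
  have h1 : (2:ℝ) ≤ ∫ q, dist q.1 q.2 ∂(μ.prod ν) := by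
    rw [← h]; exact W_le (by simp) (by simp)
  have h2 : ∫ q, (2 - dist q.1 q.2) ∂(μ.prod ν) = 0 := by
    apply le_antisymm
    · rw [integral_sub (integrable_const _) (integ2 _ (by fun_prop))]
      simp; linarith
    · exact integral_nonneg fun q => by simpa using dist_le_two q.1 q.2
  rw [integral_eq_zero_iff_of_nonneg (fun q => by simpa using dist_le_two q.1 q.2)
    (integ2 _ (by fun_prop))] at h2
  have := Measure.ae_ae_of_ae_prod h2
  filter_upwards [this] with x hx
  filter_upwards [hx] with y hy
  simp at hy; linarith

lemma W_two_dirac {μ : Measure X} [IsProbabilityMeasure μ] {y : X}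
    (h : Wdist 1 μ (Measure.dirac y) = 2) : ∀ᵐ x ∂μ, dist x y = 2 := by
  filter_upwards [W_two h] with x hx
  rwa [ae_dirac_iff] at hx
  exact measurableSet_eq_fun (by fun_prop) (by fun_prop)

lemma W_dirac_const {μ : Measure X} [IsProbabilityMeasure μ] {y : X} {r : ℝ}
    (h : ∀ᵐ x ∂μ, dist x y = r) : Wdist 1 μ (Measure.dirac y) = r := by
  rw [W_dirac, integral_congr_ae h]; simp

/-- clamp to the square -/
noncomputable def pt (a b : ℝ) : X :=
  ⟨(max (-1) (min 1 a), max (-1) (min 1 b)), by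
    simp [Prod.le_def]⟩

lemma pt_cont : Continuous fun p : ℝ × ℝ => pt p.1 p.2 := by
  unfold pt
  fun_prop

lemma pt1 {a b : ℝ} (h : -1 ≤ a) (h' : a ≤ 1) : (pt a b).1.1 = a := by
  simp [pt, h, h']

lemma pt2 {a b : ℝ} (h : -1 ≤ b) (h' : b ≤ 1) : (pt a b).1.2 = b := by
  simp [pt, h, h']

lemma extX {x y : X} (h1 : x.1.1 = y.1.1) (h2 : x.1.2 = y.1.2) : x = y :=
  Subtype.ext (Prod.ext h1 h2)

lemma dist_two_iff (x y : X) : dist x y = 2 ↔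
    (x.1.1 = 1 ∧ y.1.1 = -1) ∨ (x.1.1 = -1 ∧ y.1.1 = 1) ∨
    (x.1.2 = 1 ∧ y.1.2 = -1) ∨ (x.1.2 = -1 ∧ y.1.2 = 1) := by
  rw [distX]
  have h := b1 x
  have k := b1 y
  grind

def IsC (x : X) : Prop := (x.1.1 = 1 ∨ x.1.1 = -1) ∧ (x.1.2 = 1 ∨ x.1.2 = -1)

def D (a b c d : ℝ) : Prop := (a = 1 ∧ c = -1) ∨ (a = -1 ∧ c = 1) ∨ (b = 1 ∧ d = -1) ∨ (b = -1 ∧ d = 1)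
/-- three points with the same second coordinate -/
lemma tri {a a' a'' b b' b'' : ℝ} (h1 : D a b a' b') (h2 : D a b a'' b'') (h3 : D a' b' a'' b'') 
  (hb : b = b') (hb' : b = b'') : False := by
  unfold D at *; grind
lemma Dsw {a b c d : ℝ} (h : D a b c d) : D b a d c := by unfold D at *; tauto
lemma Dcm {a b c d : ℝ} (h : D a b c d) : D c d a b := by unfold D at *; tauto
lemma cor1 {a1 a2 a3 a4 e1 e2 e3 e4 : ℝ} (h12 : D a1 e1 a2 e2) (h13 : D a1 e1 a3 e3)
  (h14 : D a1 e1 a4 e4) (h23 : D a2 e2 a3 e3) (h24 : D a2 e2 a4 e4) (h34 : D a3 e3 a4 e4) : a1 = 1 ∨ a1 = -1 := by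
  by_contra hh
  push Not at hh
  have t := tri h23 h24 h34
  unfold D at h12 h13 h14
  grind
lemma fin4 {a1 a2 a3 a4 e1 e2 e3 e4 : ℝ} (h12 : D a1 e1 a2 e2) (h13 : D a1 e1 a3 e3)
  (h14 : D a1 e1 a4 e4) (h23 : D a2 e2 a3 e3) (h24 : D a2 e2 a4 e4) (h34 : D a3 e3 a4 e4) : 
  a1 = -(a2+a3+a4) := by
  have c1 := cor1 h12 h13 h14 h23 h24 h34
  have c2 := cor1 (Dcm h12) h23 h24 h13 h14 h34
  have c3 := cor1 (Dcm h13) (Dcm h23) h34 h12 h14 h24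
  have c4 := cor1 (Dcm h14) (Dcm h24) (Dcm h34) h12 h13 h23
  have d1 := cor1 (Dsw h12) (Dsw h13) (Dsw h14) (Dsw h23) (Dsw h24) (Dsw h34)
  have t1 := tri (Dsw h12) (Dsw h13) (Dsw h23)
  have t2 := tri (Dsw h12) (Dsw h14) (Dsw h24)
  have t3 := tri (Dsw h13) (Dsw h14) (Dsw h34)
  have t4 := tri (Dsw h23) (Dsw h24) (Dsw h34)
  clear h12 h13 h14 h23 h24 h34 d1
  rcases c1 with rfl | rfl <;> rcases c2 with rfl | rfl <;> rcases c3 with rfl | rfl <;> 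
  rcases c4 with rfl | rfl <;> first | (exfalso; simp at t1 t2 t3 t4; done) | norm_num

lemma quad {x y z w : X} (hxy : dist x y = 2) (hxz : dist x z = 2) (hxw : dist x w = 2)
    (hyz : dist y z = 2) (hyw : dist y w = 2) (hzw : dist z w = 2) :
    IsC x ∧ x.1.1 = -(y.1.1 + z.1.1 + w.1.1) ∧ x.1.2 = -(y.1.2 + z.1.2 + w.1.2) := by
  rw [dist_two_iff] at *
  exact ⟨⟨cor1 hxy hxz hxw hyz hyw hzw,
    cor1 (Dsw hxy) (Dsw hxz) (Dsw hxw) (Dsw hyz) (Dsw hyw) (Dsw hzw)⟩,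
    fin4 hxy hxz hxw hyz hyw hzw,
    fin4 (Dsw hxy) (Dsw hxz) (Dsw hxw) (Dsw hyz) (Dsw hyw) (Dsw hzw)⟩

end DR
namespace DR

lemma ae_const_dirac {μ : Measure X} [IsProbabilityMeasure μ] {p : X}
    (h : ∀ᵐ x ∂μ, x = p) : μ = Measure.dirac p := by
  have : μ.map id = μ.map (fun _ => p) := Measure.map_congr h
  rw [Measure.map_id, Measure.map_const] at this
  simpa using this

lemma quadM {μ₁ μ₂ μ₃ μ₄ : Measure X} [IsProbabilityMeasure μ₁] [IsProbabilityMeasure μ₂]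
    [IsProbabilityMeasure μ₃] [IsProbabilityMeasure μ₄]
    (h21 : Wdist 1 μ₂ μ₁ = 2) (h31 : Wdist 1 μ₃ μ₁ = 2) (h41 : Wdist 1 μ₄ μ₁ = 2)
    (h23 : Wdist 1 μ₂ μ₃ = 2) (h24 : Wdist 1 μ₂ μ₄ = 2) (h34 : Wdist 1 μ₃ μ₄ = 2) :
    ∃ p, μ₁ = Measure.dirac p := by
  obtain ⟨x₂, a1, a2, a3⟩ := ((W_two h21).and ((W_two h23).and (W_two h24))).exists
  obtain ⟨x₃, b1, b2, b3⟩ := ((W_two h31).and (a2.and (W_two h34))).exists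
  obtain ⟨x₄, c1, c2, c3⟩ := ((W_two h41).and (a3.and b3)).exists
  have key := a1.and (b1.and c1)
  obtain ⟨p, p2, p3, p4⟩ := key.exists
  refine ⟨p, ae_const_dirac ?_⟩
  filter_upwards [key] with x hx
  obtain ⟨q2, q3, q4⟩ := hx
  rw [dist_comm] at p2 p3 p4 q2 q3 q4
  obtain ⟨-, s1, s2⟩ := quad p2 p3 p4 b2 c2 c3
  obtain ⟨-, t1, t2⟩ := quad q2 q3 q4 b2 c2 c3
  exact extX (by rw [t1, s1]) (by rw [t2, s2])

noncomputable def ng (x : X) : X := pt (-x.1.1) (-x.1.2)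

lemma ng1 (x : X) : (ng x).1.1 = -x.1.1 := by
  have := b1 x
  exact pt1 (by linarith) (by linarith)

lemma ng2 (x : X) : (ng x).1.2 = -x.1.2 := by
  have := b1 x
  exact pt2 (by linarith) (by linarith)

lemma eqX_iff {x y : X} : x = y ↔ x.1.1 = y.1.1 ∧ x.1.2 = y.1.2 :=
  ⟨fun h => by subst h; simp, fun h => extX h.1 h.2⟩

lemma far_real {a b p q u v : ℝ} (ha : a = 1 ∨ a = -1) (hb : b = 1 ∨ b = -1)
    (hp : p = 1 ∨ p = -1) (hq : q = 1 ∨ q = -1) (h1 : ¬ (p = a ∧ q = b)) (h2 : ¬ (p = -a ∧ q = -b))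
    (k1 : (u = 1 ∧ a = -1) ∨ (u = -1 ∧ a = 1) ∨ (v = 1 ∧ b = -1) ∨ (v = -1 ∧ b = 1))
    (k2 : (u = 1 ∧ -a = -1) ∨ (u = -1 ∧ -a = 1) ∨ (v = 1 ∧ -b = -1) ∨ (v = -1 ∧ -b = 1)) :
    (u = p ∧ v = q) ∨ (u = -p ∧ v = -q) := by
  rcases ha with rfl | rfl <;> rcases hb with rfl | rfl <;> rcases hp with rfl | rfl <;>
    rcases hq with rfl | rfl <;>
    first | (norm_num at h1; done) | (norm_num at h2; done) | (norm_num at k1 k2 ⊢; grind)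

lemma diag_real {ε u v : ℝ} (hε : ε = 1 ∨ ε = -1) (h1 : -1 ≤ u) (h2 : u ≤ 1) (h3 : -1 ≤ v)
    (h4 : v ≤ 1) : 2 ≤ max |u - 1| |v - ε| + max |u - -1| |v - -ε| ∧
    (v = ε * u ↔ max |u - 1| |v - ε| + max |u - -1| |v - -ε| = 2) := by
  have a1 : |u - 1| = 1 - u := by rw [abs_of_nonpos] <;> linarith
  have a2 : |v - 1| = 1 - v := by rw [abs_of_nonpos] <;> linarith
  have a3 : |u - -1| = 1 + u := by rw [abs_of_nonneg] <;> linarith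
  have a4 : |v - -1| = 1 + v := by rw [abs_of_nonneg] <;> linarith
  rcases hε with rfl | rfl
  · rw [a1, a2, a3, a4]
    rcases le_total u v with h | h
    · rw [max_eq_left (by linarith), max_eq_right (by linarith)]
      constructor
      · linarith
      · constructor <;> intro <;> linarith
    · rw [max_eq_right (by linarith), max_eq_left (by linarith)]
      constructor
      · linarith
      · constructor <;> intro <;> linarith
  · rw [neg_neg, a1, a2, a3, a4]
    rcases le_total u (-v) with h | h
    · rw [max_eq_left (by linarith), max_eq_right (by linarith)]
      constructor
      · linarith
      · constructor <;> intro <;> linarith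
    · rw [max_eq_right (by linarith), max_eq_left (by linarith)]
      constructor
      · linarith
      · constructor <;> intro <;> linarith

lemma leg_real1 {ε u s : ℝ} (hε : ε = 1 ∨ ε = -1) (h2 : u ≤ 1) (hs' : s ≤ 1)
    (h : s < u) : max |u - 1| |ε * u - ε| = |1 - s| - |u - s| := by
  have : |ε * u - ε| = |u - 1| := by
    rcases hε with rfl | rfl
    · simp
    · rw [← abs_neg]; congr 1; ring
  rw [this, max_self, abs_of_nonpos (by linarith), abs_of_nonneg (by linarith),
    abs_of_nonneg (by linarith)]
  ring

lemma leg_real2 {ε u s : ℝ} (hε : ε = 1 ∨ ε = -1) (h1 : -1 ≤ u) (hs : -1 ≤ s)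
    (h : ¬ s < u) : max |u - -1| |ε * u - -ε| = |-1 - s| - |u - s| := by
  have : |ε * u - -ε| = |u - -1| := by
    rcases hε with rfl | rfl
    · simp
    · rw [← abs_neg]; congr 1; ring
  push Not at h
  rw [this, max_self, abs_of_nonneg (by linarith), abs_of_nonpos (by linarith),
    abs_of_nonpos (by linarith)]
  ring
lemma lip_real (u v s : ℝ) : -|u - s| - -|v - s| ≤ |u - v| := by
  have := abs_sub_abs_le_abs_sub (v - s) (u - s)
  rw [abs_sub_comm u v]
  simp only [sub_sub_sub_cancel_right] at this
  linarith

lemma sgn_real {ε : ℝ} (h : ε = 1 ∨ ε = -1) : -ε = 1 ∨ -ε = -1 := by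
  rcases h with rfl | rfl <;> simp

lemma sgn_ne {ε : ℝ} (h : ε = 1 ∨ ε = -1) : ε ≠ -ε := by
  rcases h with rfl | rfl <;> norm_num

lemma sgn_far {ε : ℝ} (h : ε = 1 ∨ ε = -1) : (ε = 1 ∧ -ε = -1) ∨ (ε = -1 ∧ -ε = 1) := by
  rcases h with rfl | rfl <;> norm_num

lemma far_pt {c e x : X} (hc : IsC c) (he : IsC e) (h1 : e ≠ c) (h2 : e ≠ ng c)
    (k1 : dist x c = 2) (k2 : dist x (ng c) = 2) : x = e ∨ x = ng e := by
  rw [dist_two_iff] at k1 k2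
  rw [ng1, ng2] at k2
  rw [Ne, eqX_iff] at h1 h2
  rw [ng1, ng2] at h2
  rw [eqX_iff, eqX_iff, ng1, ng2]
  exact far_real hc.1 hc.2 he.1 he.2 h1 h2 k1 k2

lemma two_corner {c e : X} (hc : IsC c) (he : IsC e) (h1 : e ≠ c) (h2 : e ≠ ng c)
    {m m' : Measure X} [IsProbabilityMeasure m] [IsProbabilityMeasure m']
    (a1 : Wdist 1 m (Measure.dirac c) = 2) (a2 : Wdist 1 m (Measure.dirac (ng c)) = 2)
    (b1 : Wdist 1 m' (Measure.dirac c) = 2) (b2 : Wdist 1 m' (Measure.dirac (ng c)) = 2)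
    (h : Wdist 1 m (Measure.dirac e) = Wdist 1 m' (Measure.dirac e)) : m = m' := by
  have hd : dist (ng e) e = 2 := by
    rw [dist_two_iff, ng1, ng2]
    unfold IsC at he
    grind
  have key : ∀ (n : Measure X) [IsProbabilityMeasure n],
      Wdist 1 n (Measure.dirac c) = 2 → Wdist 1 n (Measure.dirac (ng c)) = 2 →
      ∀ A, MeasurableSet A → n.real A = A.indicator 1 e +
        (A.indicator 1 (ng e) - A.indicator 1 e) / 2 * Wdist 1 n (Measure.dirac e) := by
    intro n _ k1 k2 A hA
    have hae : A.indicator (1 : X → ℝ) =ᵐ[n] fun x => A.indicator 1 e +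
        (A.indicator 1 (ng e) - A.indicator 1 e) / 2 * dist x e := by
      filter_upwards [W_two_dirac k1, W_two_dirac k2] with x r1 r2
      rcases far_pt hc he h1 h2 r1 r2 with rfl | rfl
      · simp
      · rw [hd]; ring
    rw [← integral_indicator_one hA, integral_congr_ae hae, integral_add (integrable_const _)
      ((integ n (by fun_prop)).const_mul _), integral_const_mul, W_dirac]
    simp
  apply Measure.ext
  intro A hA
  rw [← measureReal_eq_measureReal_iff, key m a1 a2 A hA, key m' b1 b2 A hA, h]

lemma ae_diag {ε : ℝ} (hε : ε = 1 ∨ ε = -1) (x : X) :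
    2 ≤ dist x (pt 1 ε) + dist x (ng (pt 1 ε)) ∧
    (x.1.2 = ε * x.1.1 ↔ dist x (pt 1 ε) + dist x (ng (pt 1 ε)) = 2) := by
  have e1 : (pt 1 ε).1.1 = 1 := pt1 (by norm_num) (by norm_num)
  have e2 : (pt 1 ε).1.2 = ε := by
    apply pt2 <;> rcases hε with rfl | rfl <;> norm_num
  have h := b1 x
  rw [distX, distX, ng1, ng2, e1, e2]
  exact diag_real hε h.1 h.2.1 h.2.2.1 h.2.2.2

lemma leg {ε : ℝ} (hε : ε = 1 ∨ ε = -1) {μ ν : Measure X} [IsProbabilityMeasure μ]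
    [IsProbabilityMeasure ν] (hμ : ∀ᵐ x ∂μ, x.1.2 = ε * x.1.1)
    (h : ∀ m : Measure X, IsProbabilityMeasure m →
      (∀ᵐ x ∂m, x = pt 1 ε ∨ x = ng (pt 1 ε)) → Wdist 1 ν m = Wdist 1 μ m)
    (s : ℝ) (hs : -1 ≤ s) (hs' : s ≤ 1) :
    ∫ x : X, |x.1.1 - s| ∂μ ≤ ∫ x : X, |x.1.1 - s| ∂ν := by
  classical
  have e1 : (pt 1 ε).1.1 = 1 := pt1 (by norm_num) (by norm_num)
  have e2 : (pt 1 ε).1.2 = ε := by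
    apply pt2 <;> rcases hε with rfl | rfl <;> norm_num
  have hms : MeasurableSet {x : X | s < x.1.1} :=
    measurableSet_lt measurable_const (by fun_prop)
  set G : X → X := fun x => if s < x.1.1 then pt 1 ε else ng (pt 1 ε) with hG
  have hGm : Measurable G := Measurable.ite hms measurable_const measurable_const
  have hf : Continuous fun x : X => |x.1.1 - s| := by fun_prop
  have hp : IsProbabilityMeasure (μ.map G) := Measure.isProbabilityMeasure_map hGm.aemeasurable
  have hs0 := h (μ.map G) hp (by
    rw [ae_map_iff hGm.aemeasurable]
    · refine Filter.Eventually.of_forall fun x => ?_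
      simp only [hG]; split_ifs <;> simp
    · exact (measurableSet_singleton _).union (measurableSet_singleton _))
  have up : Wdist 1 μ (μ.map G) ≤ ∫ x, |x.1.1 - s| ∂(μ.map G) - ∫ x, |x.1.1 - s| ∂μ := by
    refine (W_map_le hGm).trans ?_
    rw [integral_map hGm.aemeasurable hf.aestronglyMeasurable, ← integral_sub]
    · apply le_of_eq
      apply integral_congr_ae
      filter_upwards [hμ] with x hx
      have := b1 x
      simp only [hG]
      split_ifs with hh
      · rw [distX, e1, e2, hx]
        exact leg_real1 hε this.2.1 hs' hh
      · rw [distX, ng1, ng2, e1, e2, hx]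
        exact leg_real2 hε this.1 hs hh
    · refine (integrable_map_measure hf.aestronglyMeasurable hGm.aemeasurable).1 ?_
      exact integ _ hf
    · exact integ _ hf
  have lo := lip_le_W (μ := ν) (ν := μ.map G) (f := fun x => -|x.1.1 - s|) hf.neg (by
    intro x y
    rw [distX]
    exact (lip_real _ _ _).trans (le_max_left _ _))
  rw [integral_neg, integral_neg] at lo
  linarith

lemma pot_unique {μ ν : Measure X} [IsProbabilityMeasure μ] [IsProbabilityMeasure ν]
    (h : ∀ s : ℝ, -1 ≤ s → s ≤ 1 → ∫ x : X, |x.1.1 - s| ∂μ = ∫ x : X, |x.1.1 - s| ∂ν) :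
    μ.map (fun x => x.1.1) = ν.map (fun x => x.1.1) := by
  have hall : ∀ s : ℝ, ∫ x : X, |x.1.1 - s| ∂μ = ∫ x : X, |x.1.1 - s| ∂ν := by
    intro s
    rcases lt_or_ge s (-1) with h1 | h1
    · have e : (fun x : X => |x.1.1 - s|) = fun x : X => |x.1.1 - (-1)| + (-1 - s) := by
        funext x; have := b1 x; grind
      rw [e, integral_add (integ _ (by fun_prop)) (integrable_const _),
        integral_add (integ _ (by fun_prop)) (integrable_const _),
        h _ le_rfl (by norm_num)]
      simp
    · rcases le_or_gt s 1 with h2 | h2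
      · exact h s h1 h2
      · have e : (fun x : X => |x.1.1 - s|) = fun x : X => |x.1.1 - 1| + (s - 1) := by
          funext x; have := b1 x; grind
        rw [e, integral_add (integ _ (by fun_prop)) (integrable_const _),
          integral_add (integ _ (by fun_prop)) (integrable_const _),
          h _ (by norm_num) le_rfl]
        simp
  have hm : Measurable fun x : X => x.1.1 := by fun_prop
  have : IsProbabilityMeasure (μ.map fun x : X => x.1.1) :=
    Measure.isProbabilityMeasure_map hm.aemeasurable
  have : IsProbabilityMeasure (ν.map fun x : X => x.1.1) :=
    Measure.isProbabilityMeasure_map hm.aemeasurable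
  apply Measure.ext_of_Iic
  intro s
  rw [Measure.map_apply hm measurableSet_Iic, Measure.map_apply hm measurableSet_Iic]
  have hA : MeasurableSet ((fun x : X => x.1.1) ⁻¹' Set.Iic s) := hm measurableSet_Iic
  rw [← measureReal_eq_measureReal_iff, ← integral_indicator_one hA, ← integral_indicator_one hA]
  set F : ℕ → X → ℝ := fun n x => ((|x.1.1 - (s + 1 / ((n:ℝ) + 1))| - |x.1.1 - s|) * ((n:ℝ) + 1) + 1) / 2
    with hF
  have hFc : ∀ n, Continuous (F n) := fun n => by simp only [hF]; fun_prop
  have lim : ∀ (m : Measure X) [IsProbabilityMeasure m], Filter.Tendsto (fun n => ∫ x, F n x ∂m)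
      Filter.atTop (nhds (∫ x, ((fun x : X => x.1.1) ⁻¹' Set.Iic s).indicator 1 x ∂m)) := by
    intro m _
    apply tendsto_integral_of_dominated_convergence (fun _ => (1:ℝ))
    · exact fun n => (hFc n).aestronglyMeasurable
    · exact integrable_const _
    · intro n
      refine Filter.Eventually.of_forall fun x => ?_
      have hn : (0:ℝ) < (n:ℝ) + 1 := by positivity
      have hb : |(|x.1.1 - (s + 1 / ((n:ℝ) + 1))| - |x.1.1 - s|)| ≤ 1 / ((n:ℝ) + 1) := by
        have : 0 < 1 / ((n:ℝ) + 1) := by positivity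
        grind
      have hb2 : |(|x.1.1 - (s + 1 / ((n:ℝ) + 1))| - |x.1.1 - s|) * ((n:ℝ) + 1)| ≤ 1 := by
        rw [abs_mul, abs_of_pos hn]
        rwa [le_div_iff₀ hn] at hb
      simp only [hF, Real.norm_eq_abs]
      rw [abs_le] at hb2 ⊢
      constructor <;> linarith
    · refine Filter.Eventually.of_forall fun x => ?_
      by_cases hx : x.1.1 ≤ s
      · have : ∀ n, F n x = 1 := by
          intro n
          have hn : (0:ℝ) < (n:ℝ) + 1 := by positivity
          have : 0 < 1 / ((n:ℝ) + 1) := by positivity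
          simp only [hF]
          rw [abs_of_nonpos (by linarith), abs_of_nonpos (by linarith)]
          field_simp
          ring
        rw [Set.indicator_of_mem (by exact hx)]
        simp [this]
      · push Not at hx
        rw [Set.indicator_of_notMem (by simpa using hx)]
        apply tendsto_const_nhds.congr'
        have hev := (tendsto_one_div_add_atTop_nhds_zero_nat (𝕜 := ℝ)).eventually
          (gt_mem_nhds (sub_pos.2 hx))
        filter_upwards [hev] with n h1
        have hn : (0:ℝ) < (n:ℝ) + 1 := by positivity
        simp only [hF]
        rw [abs_of_pos (by linarith), abs_of_pos (by linarith)]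
        field_simp
        ring
  have heq : ∀ n, ∫ x, F n x ∂μ = ∫ x, F n x ∂ν := by
    intro n
    have : ∀ (m : Measure X) [IsProbabilityMeasure m], ∫ x, F n x ∂m =
        ((∫ x, |x.1.1 - (s + 1 / ((n:ℝ) + 1))| ∂m - ∫ x, |x.1.1 - s| ∂m) * ((n:ℝ) + 1) + 1) / 2 := by
      intro m _
      simp only [hF]
      rw [integral_div, integral_add (integ _ (by fun_prop)) (integrable_const _),
        integral_mul_const, integral_sub (integ _ (by fun_prop)) (integ _ (by fun_prop))]
      simp
    rw [this μ, this ν, hall, hall]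
  have l1 := lim μ
  simp only [heq] at l1
  exact tendsto_nhds_unique l1 (lim ν)

lemma diag_unique {ε : ℝ} {μ ν : Measure X} [IsProbabilityMeasure μ]
    [IsProbabilityMeasure ν] (hμ : ∀ᵐ x ∂μ, x.1.2 = ε * x.1.1)
    (hν : ∀ᵐ x ∂ν, x.1.2 = ε * x.1.1)
    (h : μ.map (fun x => x.1.1) = ν.map (fun x => x.1.1)) : μ = ν := by
  have hm : Measurable fun x : X => x.1.1 := by fun_prop
  have hr : Measurable fun r : ℝ => pt r (ε * r) :=
    (pt_cont.comp (f := fun r : ℝ => (r, ε * r)) (by fun_prop)).measurable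
  have key : ∀ m : Measure X, (∀ᵐ x ∂m, x.1.2 = ε * x.1.1) →
      (m.map (fun x => x.1.1)).map (fun r : ℝ => pt r (ε * r)) = m := by
    intro m hh
    rw [Measure.map_map hr hm]
    conv_rhs => rw [← Measure.map_id (μ := m)]
    apply Measure.map_congr
    filter_upwards [hh] with x hx
    have := b1 x
    simp only [Function.comp, id]
    rw [← hx]
    exact extX (pt1 (by linarith) (by linarith)) (pt2 (by linarith) (by linarith))
  rw [← key μ hμ, ← key ν hν, h]

lemma isW_prob {Ψ : Measure X → Measure X} (hΨ : IsWIsometry X 1 Ψ) (μ : Measure X)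
    [hp : IsProbabilityMeasure μ] : IsProbabilityMeasure (Ψ μ) :=
  (hΨ.1.mapsTo (mem_WSet hp)).1

lemma isW_dist {Ψ : Measure X → Measure X} (hΨ : IsWIsometry X 1 Ψ) (μ ν : Measure X)
    [hp : IsProbabilityMeasure μ] [hq : IsProbabilityMeasure ν] :
    Wdist 1 (Ψ μ) (Ψ ν) = Wdist 1 μ ν :=
  hΨ.2 μ (mem_WSet hp) ν (mem_WSet hq)

lemma fixed {Ψ : Measure X → Measure X} (hΨ : IsWIsometry X 1 Ψ)
    (hc : ∀ c, IsC c → Ψ (Measure.dirac c) = Measure.dirac c) {ε : ℝ} (hε : ε = 1 ∨ ε = -1)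
    (μ : Measure X) [IsProbabilityMeasure μ] (hμ : ∀ᵐ x ∂μ, x.1.2 = ε * x.1.1) : Ψ μ = μ := by
  have := isW_prob hΨ μ
  have e1 : (pt 1 ε).1.1 = 1 := pt1 (by norm_num) (by norm_num)
  have e2 : (pt 1 ε).1.2 = ε := by
    apply pt2 <;> rcases hε with rfl | rfl <;> norm_num
  have f1 : (pt 1 (-ε)).1.1 = 1 := pt1 (by norm_num) (by norm_num)
  have f2 : (pt 1 (-ε)).1.2 = -ε := by
    apply pt2 <;> rcases hε with rfl | rfl <;> norm_num
  have hcC : IsC (pt 1 ε) := ⟨Or.inl e1, by rw [e2]; exact hε⟩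
  have hcC' : IsC (ng (pt 1 ε)) := by
    unfold IsC; rw [ng1, ng2, e1, e2]; exact ⟨Or.inr rfl, sgn_real hε⟩
  have heC : IsC (pt 1 (-ε)) := ⟨Or.inl f1, by rw [f2]; exact sgn_real hε⟩
  have heC' : IsC (ng (pt 1 (-ε))) := by
    unfold IsC; rw [ng1, ng2, f1, f2]; exact ⟨Or.inr rfl, sgn_real (sgn_real hε)⟩
  -- distances to corners are preserved
  have hd : ∀ (m : Measure X) [IsProbabilityMeasure m] (c : X), IsC c →
      Wdist 1 (Ψ m) (Measure.dirac c) = Wdist 1 m (Measure.dirac c) := by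
    intro m _ c h
    conv_lhs => rw [← hc c h]
    exact isW_dist hΨ _ _
  -- two-corner measures are fixed
  have hfix : ∀ m : Measure X, IsProbabilityMeasure m →
      (∀ᵐ x ∂m, x = pt 1 ε ∨ x = ng (pt 1 ε)) → Ψ m = m := by
    intro m hm hh
    have := isW_prob hΨ m
    have k1 : Wdist 1 m (Measure.dirac (pt 1 (-ε))) = 2 := by
      apply W_dirac_const
      filter_upwards [hh] with x hx
      rw [dist_two_iff, f1, f2]
      rcases hx with rfl | rfl
      · rw [e1, e2]; exact Or.inr (Or.inr (sgn_far hε))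
      · rw [ng1, ng2, e1, e2]; exact Or.inr (Or.inl ⟨rfl, rfl⟩)
    have k2 : Wdist 1 m (Measure.dirac (ng (pt 1 (-ε)))) = 2 := by
      apply W_dirac_const
      filter_upwards [hh] with x hx
      rw [dist_two_iff, ng1, ng2, f1, f2]
      rcases hx with rfl | rfl
      · rw [e1, e2]; exact Or.inl ⟨rfl, rfl⟩
      · rw [ng1, ng2, e1, e2]; exact Or.inr (Or.inr (sgn_far (sgn_real hε)))
    refine two_corner heC hcC ?_ ?_ ?_ ?_ k1 k2 (hd m _ hcC)
    · rw [Ne, eqX_iff, e1, e2, f1, f2]; exact fun h => sgn_ne hε h.2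
    · rw [Ne, eqX_iff, ng1, ng2, e1, e2, f1, f2]; norm_num
    · rw [hd m _ heC, k1]
    · rw [hd m _ heC', k2]
  have hW : ∀ m : Measure X, IsProbabilityMeasure m →
      (∀ᵐ x ∂m, x = pt 1 ε ∨ x = ng (pt 1 ε)) → Wdist 1 (Ψ μ) m = Wdist 1 μ m := by
    intro m hm hh
    conv_lhs => rw [← hfix m hm hh]
    exact isW_dist hΨ _ _
  have hν : ∀ᵐ x ∂(Ψ μ), x.1.2 = ε * x.1.1 := by
    have t1 := hd μ _ hcC
    have t2 := hd μ _ hcC'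
    rw [W_dirac, W_dirac] at t1 t2
    have t3 : ∫ x, (dist x (pt 1 ε) + dist x (ng (pt 1 ε))) ∂μ = 2 := by
      rw [integral_congr_ae (g := fun _ => (2:ℝ))]
      · simp
      · filter_upwards [hμ] with x hx
        exact (ae_diag hε x).2.1 hx
    have t4 : ∫ x, (dist x (pt 1 ε) + dist x (ng (pt 1 ε)) - 2) ∂(Ψ μ) = 0 := by
      rw [integral_sub (integ _ (by fun_prop)) (integrable_const _),
        integral_add (integ _ (by fun_prop)) (integ _ (by fun_prop)), t1, t2,
        ← integral_add (integ _ (by fun_prop)) (integ _ (by fun_prop)), t3]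
      simp
    rw [integral_eq_zero_iff_of_nonneg (fun x => by simpa using (ae_diag hε x).1)
      (integ _ (by fun_prop))] at t4
    filter_upwards [t4] with x hx
    rw [(ae_diag hε x).2]
    simp at hx; linarith
  refine diag_unique hν hμ (pot_unique fun s hs hs' => le_antisymm ?_ ?_)
  · exact leg hε hν (fun m hm hh => (hW m hm hh).symm) s hs hs'
  · exact leg hε hμ hW s hs hs'

end DR
namespace DR

lemma W_push_le {S : X → X} (hS : ∀ x y, dist (S x) (S y) = dist x y) (μ ν : Measure X)
    [IsProbabilityMeasure μ] [IsProbabilityMeasure ν] :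
    Wdist 1 (μ.map S) (ν.map S) ≤ Wdist 1 μ ν := by
  have hc : Continuous S := (Isometry.of_dist_eq hS).continuous
  have hm : Measurable S := hc.measurable
  have : IsProbabilityMeasure (μ.map S) := Measure.isProbabilityMeasure_map hm.aemeasurable
  apply le_W
  intro π h1 h2
  have hmm : Measurable fun q : X × X => (S q.1, S q.2) := by fun_prop
  have := W_le (μ := μ.map S) (ν := ν.map S) (π := π.map fun q => (S q.1, S q.2))
    (by rw [← h1, Measure.map_map measurable_fst hmm, Measure.map_map hm measurable_fst]; rfl)
    (by rw [← h2, Measure.map_map measurable_snd hmm, Measure.map_map hm measurable_snd]; rfl)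
  rw [integral_map hmm.aemeasurable
    (Continuous.aestronglyMeasurable (f := fun q : X × X => dist q.1 q.2) (by fun_prop))] at this
  simpa only [hS] using this

lemma push_isom {T : X → X} (hT : IsIsom T) : IsWIsometry X 1 (fun μ => μ.map T) := by
  obtain ⟨S, hST, hTS⟩ := Function.bijective_iff_has_inverse.1 hT.1
  have hS : ∀ x y, dist (S x) (S y) = dist x y := fun x y => by
    rw [← hT.2, hTS, hTS]
  have hTm : Measurable T := (Isometry.of_dist_eq hT.2).continuous.measurable
  have hSm : Measurable S := (Isometry.of_dist_eq hS).continuous.measurable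
  have e1 : ∀ μ : Measure X, (μ.map T).map S = μ := fun μ => by
    rw [Measure.map_map hSm hTm, hST.comp_eq_id, Measure.map_id]
  have e2 : ∀ μ : Measure X, (μ.map S).map T = μ := fun μ => by
    rw [Measure.map_map hTm hSm, hTS.comp_eq_id, Measure.map_id]
  have pT : ∀ μ : Measure X, IsProbabilityMeasure μ → IsProbabilityMeasure (μ.map T) :=
    fun μ _ => Measure.isProbabilityMeasure_map hTm.aemeasurable
  have pS : ∀ μ : Measure X, IsProbabilityMeasure μ → IsProbabilityMeasure (μ.map S) :=
    fun μ _ => Measure.isProbabilityMeasure_map hSm.aemeasurable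
  refine ⟨⟨fun μ hμ => mem_WSet (pT μ hμ.1), fun μ _ ν _ h => ?_, fun μ hμ =>
    ⟨μ.map S, mem_WSet (pS μ hμ.1), e2 μ⟩⟩, fun μ hμ ν hν => ?_⟩
  · rw [← e1 μ, ← e1 ν]
    exact congrArg (fun m => Measure.map S m) h
  · have := hμ.1
    have := hν.1
    have := pT μ hμ.1
    have := pT ν hν.1
    apply le_antisymm (W_push_le hT.2 μ ν)
    have := W_push_le hS (μ.map T) (ν.map T)
    rwa [e1, e1] at this

lemma comp_isom {Φ Ψ : Measure X → Measure X} (h : IsWIsometry X 1 Φ) (k : IsWIsometry X 1 Ψ) :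
    IsWIsometry X 1 (fun μ => Φ (Ψ μ)) :=
  ⟨h.1.comp k.1, fun μ hμ ν hν => by
    rw [h.2 _ (k.1.mapsTo hμ) _ (k.1.mapsTo hν), k.2 μ hμ ν hν]⟩

lemma ptC1 {a b : ℝ} (ha : a = 1 ∨ a = -1) : (pt a b).1.1 = a := by
  apply pt1 <;> rcases ha with rfl | rfl <;> norm_num

lemma ptC2 {a b : ℝ} (hb : b = 1 ∨ b = -1) : (pt a b).1.2 = b := by
  apply pt2 <;> rcases hb with rfl | rfl <;> norm_num

lemma sgn_bd {a u : ℝ} (ha : a = 1 ∨ a = -1) (h : -1 ≤ u ∧ u ≤ 1) : -1 ≤ a * u ∧ a * u ≤ 1 := by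
  rcases ha with rfl | rfl <;> constructor <;> linarith [h.1, h.2]

lemma sgn_sq {a : ℝ} (ha : a = 1 ∨ a = -1) : a * a = 1 := by
  rcases ha with rfl | rfl <;> norm_num

lemma sgn_abs {a u v : ℝ} (ha : a = 1 ∨ a = -1) : |a * u - a * v| = |u - v| := by
  rw [← mul_sub, abs_mul]
  rcases ha with rfl | rfl <;> simp

lemma isom1 {a b : ℝ} (ha : a = 1 ∨ a = -1) (hb : b = 1 ∨ b = -1) :
    IsIsom (fun x : X => pt (a * x.1.1) (b * x.1.2)) := by
  have c1 : ∀ x : X, (pt (a * x.1.1) (b * x.1.2)).1.1 = a * x.1.1 := fun x => by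
    have := sgn_bd ha ⟨(b1 x).1, (b1 x).2.1⟩
    exact pt1 this.1 this.2
  have c2 : ∀ x : X, (pt (a * x.1.1) (b * x.1.2)).1.2 = b * x.1.2 := fun x => by
    have := sgn_bd hb ⟨(b1 x).2.2.1, (b1 x).2.2.2⟩
    exact pt2 this.1 this.2
  refine ⟨Function.bijective_iff_has_inverse.2 ⟨fun x : X => pt (a * x.1.1) (b * x.1.2),
    fun x => ?_, fun x => ?_⟩, fun x y => ?_⟩
  · apply extX
    · dsimp only; rw [c1, c1, ← mul_assoc, sgn_sq ha, one_mul]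
    · dsimp only; rw [c2, c2, ← mul_assoc, sgn_sq hb, one_mul]
  · apply extX
    · dsimp only; rw [c1, c1, ← mul_assoc, sgn_sq ha, one_mul]
    · dsimp only; rw [c2, c2, ← mul_assoc, sgn_sq hb, one_mul]
  · simp only [distX, c1, c2]
    rw [sgn_abs ha, sgn_abs hb]

lemma isom2 {a b : ℝ} (ha : a = 1 ∨ a = -1) (hb : b = 1 ∨ b = -1) :
    IsIsom (fun x : X => pt (b * x.1.2) (a * x.1.1)) := by
  have c1 : ∀ (r t : ℝ) (x : X), (r = 1 ∨ r = -1) → (pt (r * x.1.2) (t * x.1.1)).1.1 = r * x.1.2 :=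
    fun r t x hr => by
    have := sgn_bd hr ⟨(b1 x).2.2.1, (b1 x).2.2.2⟩
    exact pt1 this.1 this.2
  have c2 : ∀ (r t : ℝ) (x : X), (t = 1 ∨ t = -1) → (pt (r * x.1.2) (t * x.1.1)).1.2 = t * x.1.1 :=
    fun r t x hr => by
    have := sgn_bd hr ⟨(b1 x).1, (b1 x).2.1⟩
    exact pt2 this.1 this.2
  refine ⟨Function.bijective_iff_has_inverse.2 ⟨fun x : X => pt (a * x.1.2) (b * x.1.1),
    fun x => ?_, fun x => ?_⟩, fun x y => ?_⟩
  · apply extX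
    · dsimp only; rw [c1 a b _ ha, c2 b a _ ha, ← mul_assoc, sgn_sq ha, one_mul]
    · dsimp only; rw [c2 a b _ hb, c1 b a _ hb, ← mul_assoc, sgn_sq hb, one_mul]
  · apply extX
    · dsimp only; rw [c1 b a _ hb, c2 a b _ hb, ← mul_assoc, sgn_sq hb, one_mul]
    · dsimp only; rw [c2 b a _ ha, c1 a b _ ha, ← mul_assoc, sgn_sq ha, one_mul]
  · simp only [distX, c1 b a _ hb, c2 b a _ ha]
    rw [sgn_abs ha, sgn_abs hb, max_comm]

lemma corner_ext {x y : X} (h : ¬ dist x y = 2) (hx : IsC x) (hy : IsC y) : x = y := by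
  rw [dist_two_iff] at h
  obtain ⟨h1, h2⟩ := hx
  obtain ⟨k1, k2⟩ := hy
  apply extX
  · rcases h1 with h1 | h1 <;> rcases k1 with k1 | k1 <;> simp_all
  · rcases h2 with h2 | h2 <;> rcases k2 with k2 | k2 <;> simp_all

lemma mid_pt {p₁ p₂ p₃ p₄ : X} (h1 : IsC p₁) (h2 : IsC p₂)
    (h3 : IsC p₃) (h4 : IsC p₄)
    (h12 : dist p₁ p₂ = 2) (h34 : dist p₃ p₄ = 2)
    (s1 : p₁.1.1 = -(p₂.1.1 + p₃.1.1 + p₄.1.1)) (s2 : p₁.1.2 = -(p₂.1.2 + p₃.1.2 + p₄.1.2))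
    (hne : p₂ ≠ ng p₁) :
    ∃ q : X, dist q p₁ = 2 ∧ dist q p₂ = 2 ∧ dist q p₃ = 1 ∧ dist q p₄ = 1 := by
  have bb1 := b1 p₃
  have bb2 := b1 p₄
  refine ⟨pt ((p₃.1.1 + p₄.1.1) / 2) ((p₃.1.2 + p₄.1.2) / 2), ?_⟩
  simp only [distX] at *
  rw [pt1 (by linarith) (by linarith), pt2 (by linarith) (by linarith)]
  rw [Ne, eqX_iff, ng1, ng2] at hne
  obtain ⟨u1, v1⟩ := h1
  obtain ⟨u2, v2⟩ := h2
  obtain ⟨u3, v3⟩ := h3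
  obtain ⟨u4, v4⟩ := h4
  clear bb1 bb2
  generalize p₁.1.1 = x1 at *
  generalize p₂.1.1 = x2 at *
  generalize p₃.1.1 = x3 at *
  generalize p₄.1.1 = x4 at *
  generalize p₁.1.2 = y1 at *
  generalize p₂.1.2 = y2 at *
  generalize p₃.1.2 = y3 at *
  generalize p₄.1.2 = y4 at *
  clear p₁ p₂ p₃ p₄
  rcases u2 with rfl | rfl <;> rcases u3 with rfl | rfl <;> rcases u4 with rfl | rfl <;>
  rcases v2 with rfl | rfl <;> rcases v3 with rfl | rfl <;> rcases v4 with rfl | rfl <;>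
  subst s1 <;> subst s2 <;>
  first
  | (norm_num at u1; done)
  | (norm_num at v1; done)
  | (norm_num at hne; done)
  | (norm_num at h12; done)
  | (norm_num at h34; done)
  | (norm_num; done)

/-- half-half measure -/
noncomputable def hf (x y : X) : Measure X :=
  (2⁻¹ : ENNReal) • Measure.dirac x + (2⁻¹ : ENNReal) • Measure.dirac y

lemma hf_prob (x y : X) : IsProbabilityMeasure (hf x y) := by
  constructor
  simp [hf, ENNReal.inv_two_add_inv_two]

lemma hf_W (x y z : X) : Wdist 1 (hf x y) (Measure.dirac z) = (dist x z + dist y z) / 2 := by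
  have := hf_prob x y
  rw [W_dirac, hf, integral_add_measure, integral_smul_measure, integral_smul_measure]
  · simp; ring
  · exact (integ _ (by fun_prop)).smul_measure (by simp)
  · exact (integ _ (by fun_prop)).smul_measure (by simp)

lemma final (Φ : Measure X → Measure X) (hΦ : IsWIsometry X 1 Φ) :
    ∃ T : X → X, IsIsom T ∧ ∀ c, IsC c → Φ ((Measure.dirac c).map T) = Measure.dirac c := by
  have o : (1:ℝ) = 1 ∨ (1:ℝ) = -1 := Or.inl rfl
  have o' : (-1:ℝ) = 1 ∨ (-1:ℝ) = -1 := Or.inr rfl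
  set c₁ := pt 1 1 with hc₁
  set c₂ := pt (-1) (-1) with hc₂
  set c₃ := pt 1 (-1) with hc₃
  set c₄ := pt (-1) 1 with hc₄
  have x1 : c₁.1.1 = 1 := ptC1 o
  have y1 : c₁.1.2 = 1 := ptC2 o
  have x2 : c₂.1.1 = -1 := ptC1 o'
  have y2 : c₂.1.2 = -1 := ptC2 o'
  have x3 : c₃.1.1 = 1 := ptC1 o
  have y3 : c₃.1.2 = -1 := ptC2 o'
  have x4 : c₄.1.1 = -1 := ptC1 o'
  have y4 : c₄.1.2 = 1 := ptC2 o
  have d12 : dist c₁ c₂ = 2 := by rw [dist_two_iff, x1, y1, x2, y2]; simp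
  have d13 : dist c₁ c₃ = 2 := by rw [dist_two_iff, x1, y1, x3, y3]; simp
  have d14 : dist c₁ c₄ = 2 := by rw [dist_two_iff, x1, y1, x4, y4]; simp
  have d23 : dist c₂ c₃ = 2 := by rw [dist_two_iff, x2, y2, x3, y3]; simp
  have d24 : dist c₂ c₄ = 2 := by rw [dist_two_iff, x2, y2, x4, y4]; simp
  have d34 : dist c₃ c₄ = 2 := by rw [dist_two_iff, x3, y3, x4, y4]; simp
  have n12 : c₂ = ng c₁ := extX (by rw [ng1, x1, x2]) (by rw [ng2, y1, y2])
  have pr : ∀ c, IsProbabilityMeasure (Φ (Measure.dirac c)) := fun c => isW_prob hΦ _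
  have dd : ∀ c c', dist c c' = 2 → Wdist 1 (Φ (Measure.dirac c)) (Φ (Measure.dirac c')) = 2 :=
    fun c c' h => by rw [isW_dist hΦ, W_dd, h]
  have dd' : ∀ c c', dist c c' = 2 → Wdist 1 (Φ (Measure.dirac c')) (Φ (Measure.dirac c)) = 2 :=
    fun c c' h => dd _ _ (by rw [dist_comm, h])
  obtain ⟨p₁, hp₁⟩ := quadM (dd' _ _ d12) (dd' _ _ d13) (dd' _ _ d14) (dd _ _ d23) (dd _ _ d24)
    (dd _ _ d34)
  obtain ⟨p₂, hp₂⟩ := quadM (dd _ _ d12) (dd' _ _ d23) (dd' _ _ d24) (dd _ _ d13) (dd _ _ d14)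
    (dd _ _ d34)
  obtain ⟨p₃, hp₃⟩ := quadM (dd _ _ d13) (dd _ _ d23) (dd' _ _ d34) (dd _ _ d12) (dd _ _ d14)
    (dd _ _ d24)
  obtain ⟨p₄, hp₄⟩ := quadM (dd _ _ d14) (dd _ _ d24) (dd _ _ d34) (dd _ _ d12) (dd _ _ d13)
    (dd _ _ d23)
  have e12 : dist p₁ p₂ = 2 := by have := dd _ _ d12; rwa [hp₁, hp₂, W_dd] at this
  have e13 : dist p₁ p₃ = 2 := by have := dd _ _ d13; rwa [hp₁, hp₃, W_dd] at this
  have e14 : dist p₁ p₄ = 2 := by have := dd _ _ d14; rwa [hp₁, hp₄, W_dd] at this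
  have e23 : dist p₂ p₃ = 2 := by have := dd _ _ d23; rwa [hp₂, hp₃, W_dd] at this
  have e24 : dist p₂ p₄ = 2 := by have := dd _ _ d24; rwa [hp₂, hp₄, W_dd] at this
  have e34 : dist p₃ p₄ = 2 := by have := dd _ _ d34; rwa [hp₃, hp₄, W_dd] at this
  obtain ⟨k1, s1, s2⟩ := quad e12 e13 e14 e23 e24 e34
  have e21 := e12
  have e31 := e13
  have e41 := e14
  have e32 := e23
  have e42 := e24
  have e43 := e34
  rw [dist_comm] at e21 e31 e41 e32 e42 e43
  have k2 := (quad e21 e23 e24 e13 e14 e34).1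
  have k3 := (quad e31 e32 e34 e12 e14 e24).1
  have k4 := (quad e41 e42 e43 e12 e13 e23).1
  have hopp : p₂ = ng p₁ := by
    by_contra hne
    obtain ⟨q, q1, q2, q3, q4⟩ := mid_pt k1 k2 k3 k4 e12 e34 s1 s2 hne
    have hpr := hf_prob p₃ p₄
    have hpd : IsProbabilityMeasure (Measure.dirac q) := inferInstance
    obtain ⟨m, hm, hmq⟩ := hΦ.1.surjOn (mem_WSet hpd)
    obtain ⟨m', hm', hmq'⟩ := hΦ.1.surjOn (mem_WSet hpr)
    have := hm.1
    have := hm'.1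
    have C1 : IsC c₁ := by unfold IsC; simp [x1, y1]
    have C3 : IsC c₃ := by unfold IsC; simp [x3, y3]
    have hmm : m = m' := by
      refine two_corner C1 C3 ?_ ?_ ?_ ?_ ?_ ?_ ?_
      · intro h; rw [h] at d13; simp at d13
      · intro h; rw [← n12] at h; rw [h] at d23; simp at d23
      · rw [← isW_dist hΦ, hmq, hp₁, W_dd, q1]
      · rw [← n12, ← isW_dist hΦ, hmq, hp₂, W_dd, q2]
      · rw [← isW_dist hΦ, hmq', hp₁, hf_W, e31, e41]; norm_num
      · rw [← n12, ← isW_dist hΦ, hmq', hp₂, hf_W, e32, e42]; norm_num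
      · rw [← isW_dist hΦ, ← isW_dist hΦ m', hmq, hmq', hp₃, hf_W, W_dd, q3, e43]; simp
    rw [hmm, hmq'] at hmq
    have h1 := hf_W p₃ p₄ q
    rw [hmq, W_dd, dist_comm p₃, dist_comm p₄, q3, q4] at h1
    norm_num at h1
  have hall : ∀ c, IsC c → c = p₁ ∨ c = p₂ ∨ c = p₃ ∨ c = p₄ := by
    intro c hc
    by_contra hh
    push Not at hh
    have f1 : dist c p₁ = 2 := by_contra fun h => hh.1 (corner_ext h hc k1)
    have f2 : dist c p₂ = 2 := by_contra fun h => hh.2.1 (corner_ext h hc k2)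
    have f3 : dist c p₃ = 2 := by_contra fun h => hh.2.2.1 (corner_ext h hc k3)
    have g := quad f1 f2 f3 e12 e13 e23
    have g' := quad e41 e42 e43 e12 e13 e23
    exact hh.2.2.2 (extX (by rw [g.2.1, g'.2.1]) (by rw [g.2.2, g'.2.2]))
  suffices hT : ∃ T : X → X, IsIsom T ∧ T p₁ = c₁ ∧ T p₂ = c₂ ∧ T p₃ = c₃ ∧ T p₄ = c₄ by
    obtain ⟨T, hT, t1, t2, t3, t4⟩ := hT
    refine ⟨T, hT, fun c hc => ?_⟩
    have hTm : Measurable T := (Isometry.of_dist_eq hT.2).continuous.measurable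
    rw [Measure.map_dirac' hTm]
    rcases hall c hc with rfl | rfl | rfl | rfl
    · rw [t1, hp₁]
    · rw [t2, hp₂]
    · rw [t3, hp₃]
    · rw [t4, hp₄]
  have w1 : p₂.1.1 = -p₁.1.1 := by rw [hopp, ng1]
  have w2 : p₂.1.2 = -p₁.1.2 := by rw [hopp, ng2]
  have w3 : p₄.1.1 = -p₃.1.1 := by linarith
  have w4 : p₄.1.2 = -p₃.1.2 := by linarith
  by_cases hcase : p₃.1.1 = p₁.1.1
  · have hz : p₃.1.2 = -p₁.1.2 := by
      rw [dist_two_iff, hcase] at e13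
      rcases e13 with h | h | h | h
      · linarith
      · linarith
      · rw [h.1, h.2]
      · rw [h.1, h.2, neg_neg]
    refine ⟨_, isom1 k1.1 k1.2, ?_, ?_, ?_, ?_⟩
    · rw [sgn_sq k1.1, sgn_sq k1.2]
    · rw [w1, w2, mul_neg, mul_neg, sgn_sq k1.1, sgn_sq k1.2]
    · rw [hcase, hz, mul_neg, sgn_sq k1.1, sgn_sq k1.2]
    · rw [w3, w4, hcase, hz, neg_neg, mul_neg, sgn_sq k1.1, sgn_sq k1.2]
  · have hy : p₃.1.1 = -p₁.1.1 := by
      rcases k1.1 with h | h <;> rcases k3.1 with h' | h' <;> rw [h, h'] at hcase ⊢ <;>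
        first | (exact absurd rfl hcase) | norm_num
    have hz : p₃.1.2 = p₁.1.2 := by
      rw [dist_two_iff, w1, w2, hy] at e23
      rcases e23 with h | h | h | h
      · linarith
      · linarith
      · linarith
      · linarith
    refine ⟨_, isom2 k1.1 k1.2, ?_, ?_, ?_, ?_⟩
    · rw [sgn_sq k1.1, sgn_sq k1.2]
    · rw [w1, w2, mul_neg, mul_neg, sgn_sq k1.1, sgn_sq k1.2]
    · rw [hy, hz, mul_neg, sgn_sq k1.1, sgn_sq k1.2]
    · rw [w3, w4, hy, hz, neg_neg, mul_neg, sgn_sq k1.1, sgn_sq k1.2]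

lemma supp_ae {μ : Measure X} {ε : ℝ} (h : msupport μ ⊆ {q : X | q.1.2 = ε * q.1.1}) :
    ∀ᵐ x ∂μ, x.1.2 = ε * x.1.1 := by
  rw [ae_iff]
  apply measure_null_of_locally_null
  intro x hx
  have hx' : x ∉ msupport μ := fun hh => hx (h hh)
  simp only [msupport, Set.mem_ofPred_eq, not_forall, not_not] at hx'
  obtain ⟨U, hU, hxU, h0⟩ := hx'
  exact ⟨U, mem_nhdsWithin_of_mem_nhds (hU.mem_nhds hxU), h0⟩

end DR

/-- Diagonal rigidity of `𝒲₁(Q, d_m)`: every isometry, composed with the push-forward of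
a suitable isometry of `Q`, fixes all measures supported on `L₊` or `L₋`. -/
theorem W1_Q_diagonally_rigid (Φ : Measure ↥Qs → Measure ↥Qs)
    (hΦ : IsWIsometry ↥Qs 1 Φ) :
    ∃ T : ↥Qs → ↥Qs, IsIsom T ∧ ∀ μ ∈ WSet ↥Qs 1,
      (msupport μ ⊆ LplusQ ∨ msupport μ ⊆ LminusQ) → Φ (μ.map T) = μ := by
  obtain ⟨T, hT, hc⟩ := DR.final Φ hΦ
  refine ⟨T, hT, fun μ hμ h => ?_⟩
  have := hμ.1
  have hΨ := DR.comp_isom hΦ (DR.push_isom hT)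
  rcases h with h | h
  · refine DR.fixed hΨ hc (ε := 1) (Or.inl rfl) μ (DR.supp_ae ?_)
    intro x hx
    have h2 : x.1.2 = x.1.1 := h hx
    show x.1.2 = 1 * x.1.1
    rw [h2, one_mul]
  · refine DR.fixed hΨ hc (ε := -1) (Or.inr rfl) μ (DR.supp_ae ?_)
    intro x hx
    have h2 : x.1.2 = -x.1.1 := h hx
    show x.1.2 = -1 * x.1.1
    rw [h2, neg_one_mul]
end

section
/- For every p > 1, the Wasserstein space 𝒲_p(Q) over Q = [−1,1]² with the maximum metric is diagonally rigid: for every isometry Φ : 𝒲_p(Q) → 𝒲_p(Q) there exists an isometry T of (Q, d_m) such that (Φ ∘ T_#)(μ) = μ for every μ ∈ 𝒲_p(Q) whose support is contained in L₊ = {(t,t) : t ∈ [−1,1]} or in L₋ = {(t,−t) : t ∈ [−1,1]}. -/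
open MeasureTheory

section Helpers

lemma qs_dist_def (x y : Qs) : dist x y = max |x.1.1 - y.1.1| |x.1.2 - y.1.2| := rfl

lemma qs_bd (x : Qs) : (-1 ≤ x.1.1 ∧ x.1.1 ≤ 1) ∧ (-1 ≤ x.1.2 ∧ x.1.2 ≤ 1) := by
  obtain ⟨⟨a, b⟩, ⟨h1, h2⟩, h3, h4⟩ := x
  exact ⟨⟨h1, h3⟩, ⟨h2, h4⟩⟩

lemma qs_dist_le (x y : Qs) : dist x y ≤ 2 := by
  rw [qs_dist_def]
  have hx := qs_bd x
  have hy := qs_bd y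
  refine max_le ?_ ?_ <;> rw [abs_le] <;> constructor <;> linarith [hx.1.1, hx.1.2, hx.2.1, hx.2.2, hy.1.1, hy.1.2, hy.2.1, hy.2.2]

/-- coupling predicate -/
def IsCpl (π : Measure (Qs × Qs)) (μ ν : Measure Qs) : Prop :=
  π.map Prod.fst = μ ∧ π.map Prod.snd = ν

lemma IsCpl.prob {π : Measure (Qs × Qs)} {μ ν : Measure Qs} [IsProbabilityMeasure μ]
    (h : IsCpl π μ ν) : IsProbabilityMeasure π := by
  constructor
  have : (π.map Prod.fst) Set.univ = 1 := by rw [h.1]; simp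
  rwa [Measure.map_apply measurable_fst MeasurableSet.univ, Set.preimage_univ] at this

lemma rpow_bd {p : ℝ} (hp : 1 < p) {d : ℝ} (h0 : 0 ≤ d) (h2 : d ≤ 2) : d ^ p ≤ 2 ^ p :=
  Real.rpow_le_rpow h0 h2 (by linarith)

lemma cont_cost {p : ℝ} (hp : 1 < p) : Continuous fun q : Qs × Qs => dist q.1 q.2 ^ p :=
  continuous_dist.rpow_const (fun _ => Or.inr (by linarith))

lemma cont_costc {p : ℝ} (hp : 1 < p) (c : Qs) : Continuous fun x : Qs => dist x c ^ p :=
  (continuous_id.dist continuous_const).rpow_const (fun _ => Or.inr (by linarith))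

lemma int_bdd {α : Type*} [MeasurableSpace α] (μ : Measure α) [IsFiniteMeasure μ] {f : α → ℝ}
    (hf : Measurable f) (C : ℝ) (h : ∀ x, |f x| ≤ C) : Integrable f μ :=
  Integrable.of_bound hf.aestronglyMeasurable C (Filter.Eventually.of_forall h)

lemma int_cost {p : ℝ} (hp : 1 < p) (π : Measure (Qs × Qs)) [IsFiniteMeasure π] :
    Integrable (fun q : Qs × Qs => dist q.1 q.2 ^ p) π := by
  refine int_bdd π (cont_cost hp).measurable (2 ^ p) fun q => ?_
  rw [abs_of_nonneg (Real.rpow_nonneg dist_nonneg _)]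
  exact rpow_bd hp dist_nonneg (qs_dist_le _ _)

lemma int_costc {p : ℝ} (hp : 1 < p) (c : Qs) (μ : Measure Qs) [IsFiniteMeasure μ] :
    Integrable (fun x : Qs => dist x c ^ p) μ := by
  refine int_bdd μ (cont_costc hp c).measurable (2 ^ p) fun q => ?_
  rw [abs_of_nonneg (Real.rpow_nonneg dist_nonneg _)]
  exact rpow_bd hp dist_nonneg (qs_dist_le _ _)

lemma lint_cost {p : ℝ} (hp : 1 < p) (π : Measure (Qs × Qs)) [IsFiniteMeasure π] :
    (∫⁻ q, edist q.1 q.2 ^ p ∂π) ^ (1 / p) =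
      ENNReal.ofReal ((∫ q, dist q.1 q.2 ^ p ∂π) ^ (1 / p)) := by
  have hn : 0 ≤ ∫ q, dist q.1 q.2 ^ p ∂π :=
    integral_nonneg fun q => Real.rpow_nonneg dist_nonneg _
  rw [← ENNReal.ofReal_rpow_of_nonneg hn (by positivity),
    ofReal_integral_eq_lintegral_ofReal (int_cost hp π)
      (Filter.Eventually.of_forall fun q => Real.rpow_nonneg dist_nonneg _)]
  congr 2
  ext q
  rw [edist_dist, ENNReal.ofReal_rpow_of_nonneg dist_nonneg (by linarith)]

lemma wd_nonneg (p : ℝ) (μ ν : Measure Qs) : 0 ≤ Wdist p μ ν := ENNReal.toReal_nonneg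

lemma wd_le {p : ℝ} (hp : 1 < p) {μ ν : Measure Qs} [IsProbabilityMeasure μ]
    {π : Measure (Qs × Qs)} (h : IsCpl π μ ν) :
    Wdist p μ ν ^ p ≤ ∫ q, dist q.1 q.2 ^ p ∂π := by
  haveI := h.prob
  have hn : 0 ≤ ∫ q, dist q.1 q.2 ^ p ∂π :=
    integral_nonneg fun q => Real.rpow_nonneg dist_nonneg _
  have h1 : Wdist p μ ν ≤ (∫ q, dist q.1 q.2 ^ p ∂π) ^ (1 / p) := by
    rw [Wdist]
    refine ENNReal.toReal_le_of_le_ofReal (by positivity) ?_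
    rw [← lint_cost hp]
    exact iInf₂_le (f := fun (π : Measure (Qs × Qs)) (_ : π ∈ {π : Measure (Qs × Qs) | π.map Prod.fst = μ ∧ π.map Prod.snd = ν}) => (∫⁻ q, edist q.1 q.2 ^ p ∂π) ^ (1 / p)) π h
  calc Wdist p μ ν ^ p ≤ ((∫ q, dist q.1 q.2 ^ p ∂π) ^ (1 / p)) ^ p :=
        Real.rpow_le_rpow (wd_nonneg _ _ _) h1 (by linarith)
    _ = _ := by rw [← Real.rpow_mul hn, one_div_mul_cancel (by linarith), Real.rpow_one]

lemma prod_cpl (μ ν : Measure Qs) [IsProbabilityMeasure μ] [IsProbabilityMeasure ν] :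
    IsCpl (μ.prod ν) μ ν := by
  constructor
  · exact Measure.fst_prod (μ := μ) (ν := ν)
  · exact Measure.snd_prod (μ := μ) (ν := ν)

lemma le_wd {p : ℝ} (hp : 1 < p) {μ ν : Measure Qs} [IsProbabilityMeasure μ]
    [IsProbabilityMeasure ν] {B : ℝ}
    (h : ∀ π, IsCpl π μ ν → B ≤ ∫ q, dist q.1 q.2 ^ p ∂π) :
    B ≤ Wdist p μ ν ^ p := by
  rcases le_or_gt B 0 with hB | hB
  · exact hB.trans (Real.rpow_nonneg (wd_nonneg _ _ _) _)
  have h1 : B ^ (1 / p) ≤ Wdist p μ ν := by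
    rw [Wdist]
    rw [← ENNReal.ofReal_le_iff_le_toReal]
    · refine le_iInf₂ fun π hπ => ?_
      haveI := IsCpl.prob (μ := μ) (ν := ν) hπ
      rw [lint_cost hp]
      exact ENNReal.ofReal_le_ofReal (Real.rpow_le_rpow hB.le (h π hπ) (by positivity))
    · refine ne_top_of_le_ne_top ?_ (iInf₂_le (f := fun (π : Measure (Qs × Qs)) (_ : π ∈ {π : Measure (Qs × Qs) | π.map Prod.fst = μ ∧ π.map Prod.snd = ν}) => (∫⁻ q, edist q.1 q.2 ^ p ∂π) ^ (1 / p)) (μ.prod ν) (prod_cpl μ ν))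
      rw [lint_cost hp]
      exact ENNReal.ofReal_ne_top
  calc B = (B ^ (1 / p)) ^ p := by
        rw [← Real.rpow_mul hB.le, one_div_mul_cancel (by linarith), Real.rpow_one]
    _ ≤ _ := Real.rpow_le_rpow (by positivity) h1 (by linarith)

lemma wd_dirac {p : ℝ} (hp : 1 < p) (μ : Measure Qs) [IsProbabilityMeasure μ] (c : Qs) :
    Wdist p μ (Measure.dirac c) ^ p = ∫ x, dist x c ^ p ∂μ := by
  have key : ∀ π, IsCpl π μ (Measure.dirac c) →
      ∫ q, dist q.1 q.2 ^ p ∂π = ∫ x, dist x c ^ p ∂μ := by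
    intro π h
    have h2 : ∀ᵐ q ∂π, q.2 = c := by
      have : ∀ᵐ y ∂(π.map Prod.snd), y = c := by
        rw [h.2, ae_dirac_eq]; rfl
      exact ae_of_ae_map measurable_snd.aemeasurable this
    rw [← h.1, integral_map measurable_fst.aemeasurable
      (cont_costc hp c).measurable.aestronglyMeasurable]
    apply integral_congr_ae
    filter_upwards [h2] with q hq
    rw [hq]
  apply le_antisymm
  · rw [← key _ (prod_cpl μ _)]
    exact wd_le hp (prod_cpl μ _)
  · exact le_wd hp fun π h => (key π h).ge

lemma rpow_inj2 {p : ℝ} (hp : 1 < p) {a b : ℝ} (ha : 0 ≤ a) (hb : 0 ≤ b) (h : a ^ p = b ^ p) :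
    a = b := by
  exact (Real.rpow_left_inj ha hb (by linarith)).1 h

lemma wd_dirac_dirac {p : ℝ} (hp : 1 < p) (a c : Qs) :
    Wdist p (Measure.dirac a) (Measure.dirac c) = dist a c := by
  have := wd_dirac hp (Measure.dirac a) c
  rw [integral_dirac] at this
  exact rpow_inj2 hp (wd_nonneg _ _ _) dist_nonneg this

lemma supp_of_two {p : ℝ} (hp : 1 < p) {μ ν : Measure Qs} [IsProbabilityMeasure μ]
    [IsProbabilityMeasure ν] (h : Wdist p μ ν = 2) {x y : Qs} (hx : x ∈ μ.support)
    (hy : y ∈ ν.support) : dist x y = 2 := by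
  have h1 := wd_le hp (prod_cpl μ ν)
  rw [h] at h1
  have hi : Integrable (fun q : Qs × Qs => (2:ℝ) ^ p - dist q.1 q.2 ^ p) (μ.prod ν) :=
    (integrable_const _).sub (int_cost hp _)
  have h0 : 0 ≤ fun q : Qs × Qs => (2:ℝ) ^ p - dist q.1 q.2 ^ p := fun q =>
    sub_nonneg.2 (rpow_bd hp dist_nonneg (qs_dist_le _ _))
  have h2 : ∫ q, ((2:ℝ) ^ p - dist q.1 q.2 ^ p) ∂(μ.prod ν) = 0 := by
    apply le_antisymm
    · rw [integral_sub (integrable_const _) (int_cost hp _)]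
      simpa using h1
    · exact integral_nonneg h0
  rw [integral_eq_zero_iff_of_nonneg h0 hi] at h2
  by_contra hne
  have hlt : dist x y < 2 := lt_of_le_of_ne (qs_dist_le _ _) hne
  have hopen : IsOpen {q : Qs × Qs | dist q.1 q.2 < 2} := isOpen_lt continuous_dist continuous_const
  obtain ⟨U, V, hU, hV, hxU, hyV, hUV⟩ := isOpen_prod_iff.1 hopen x y hlt
  have hz : (μ.prod ν) (U ×ˢ V) = 0 := by
    refine measure_mono_null (fun q hq => ?_) (ae_iff.1 h2)
    have : dist q.1 q.2 < 2 := hUV hq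
    have := Real.rpow_lt_rpow dist_nonneg this (by linarith : 0 < p)
    simp only [Set.mem_setOf_eq, Pi.zero_apply]
    linarith
  rw [Measure.prod_prod] at hz
  have hUp := (Measure.mem_support_iff_forall x).1 hx U (hU.mem_nhds hxU)
  have hVp := (Measure.mem_support_iff_forall y).1 hy V (hV.mem_nhds hyV)
  rcases mul_eq_zero.1 hz with h | h
  · exact hUp.ne' h
  · exact hVp.ne' h

lemma mem_supp_dirac (c : Qs) : c ∈ (Measure.dirac c).support := by
  rw [Measure.mem_support_iff_forall]
  intro U hU
  rw [Measure.dirac_apply_of_mem (mem_of_mem_nhds hU)]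
  exact zero_lt_one

lemma ae_of_two {p : ℝ} (hp : 1 < p) {μ : Measure Qs} [IsProbabilityMeasure μ] {c : Qs}
    (h : Wdist p μ (Measure.dirac c) = 2) : ∀ᵐ x ∂μ, dist x c = 2 := by
  filter_upwards [Measure.support_mem_ae (μ := μ)] with x hx
  exact supp_of_two hp h hx (mem_supp_dirac c)

lemma mem_wset {p : ℝ} (hp : 1 < p) (μ : Measure Qs) [IsProbabilityMeasure μ] :
    μ ∈ WSet Qs p := by
  refine ⟨inferInstance, ⟨(0, 0), by simp [Prod.le_def]⟩, ?_⟩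
  refine lt_of_le_of_lt (lintegral_mono (g := fun _ => (2 : ENNReal) ^ p) fun x => ?_) ?_
  · refine ENNReal.rpow_le_rpow ?_ (by linarith)
    rw [edist_dist]
    exact (ENNReal.ofReal_le_ofReal (qs_dist_le _ _)).trans (by simp)
  · simp only [lintegral_const, measure_univ, mul_one]
    exact ENNReal.rpow_lt_top_of_nonneg (by linarith) (by simp)

lemma wd_map_le {p : ℝ} (hp : 1 < p) (μ ν : Measure Qs) [IsProbabilityMeasure μ]
    [IsProbabilityMeasure ν] (T : Qs → Qs) (hT : Isometry T) :
    Wdist p (μ.map T) (ν.map T) ^ p ≤ Wdist p μ ν ^ p := by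
  have hm : Measurable T := hT.continuous.measurable
  haveI : IsProbabilityMeasure (μ.map T) := Measure.isProbabilityMeasure_map hm.aemeasurable
  refine le_wd hp fun π h => ?_
  have hm2 : Measurable (Prod.map T T) := hm.prodMap hm
  have hc : IsCpl (π.map (Prod.map T T)) (μ.map T) (ν.map T) := by
    constructor
    · rw [← h.1, Measure.map_map measurable_fst hm2, Measure.map_map hm measurable_fst]; rfl
    · rw [← h.2, Measure.map_map measurable_snd hm2, Measure.map_map hm measurable_snd]; rfl
  refine (wd_le hp hc).trans_eq ?_
  rw [integral_map hm2.aemeasurable (cont_cost hp).measurable.aestronglyMeasurable]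
  simp [hT.dist_eq]

noncomputable def mix (t : ℝ) (c c' : Qs) : Measure Qs :=
  ENNReal.ofReal t • Measure.dirac c + ENNReal.ofReal (1 - t) • Measure.dirac c'

lemma mix_prob {t : ℝ} (h0 : 0 ≤ t) (h1 : t ≤ 1) (c c' : Qs) :
    IsProbabilityMeasure (mix t c c') := by
  constructor
  simp only [mix, Measure.coe_add, Measure.coe_smul, Pi.add_apply, Pi.smul_apply, measure_univ,
    smul_eq_mul, mul_one]
  rw [← ENNReal.ofReal_add h0 (by linarith)]
  simp

lemma mix_integral {t : ℝ} (h0 : 0 ≤ t) (h1 : t ≤ 1) (c c' : Qs) (f : Qs → ℝ) :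
    ∫ x, f x ∂(mix t c c') = t * f c + (1 - t) * f c' := by
  rw [mix, integral_add_measure, integral_smul_measure, integral_smul_measure, integral_dirac,
    integral_dirac, ENNReal.toReal_ofReal h0, ENNReal.toReal_ofReal (by linarith)]
  · simp
  · exact (integrable_dirac (by simp)).smul_measure (by simp)
  · exact (integrable_dirac (by simp)).smul_measure (by simp)

lemma mix_ae (t : ℝ) (c c' : Qs) : ∀ᵐ x ∂(mix t c c'), x = c ∨ x = c' := by
  rw [mix, ae_add_measure_iff]
  constructor
  · refine Measure.ae_smul_measure ?_ _
    rw [ae_dirac_eq]; exact Or.inl rfl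
  · refine Measure.ae_smul_measure ?_ _
    rw [ae_dirac_eq]; exact Or.inr rfl

lemma eq_mix {N : Measure Qs} [IsProbabilityMeasure N] {c c' : Qs} (hc : c ≠ c')
    (h : ∀ᵐ x ∂N, x = c ∨ x = c') : N = mix (N.real {c}) c c' := by
  have h1 : N = N.restrict {c} + N.restrict {c}ᶜ :=
    (Measure.restrict_add_restrict_compl (measurableSet_singleton c)).symm
  have h2 : N.restrict {c}ᶜ = N.restrict {c'} := by
    apply Measure.restrict_congr_set
    filter_upwards [h] with x hx
    apply propext
    change x ≠ c ↔ x = c'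
    rcases hx with rfl | rfl
    · simp [hc]
    · simp [hc.symm]
  have h3 : N {c'} = ENNReal.ofReal (1 - N.real {c}) := by
    rw [← probReal_compl_eq_one_sub (measurableSet_singleton c), ofReal_measureReal]
    have := congrArg (fun m : Measure Qs => m Set.univ) h2
    simpa using this.symm
  conv_lhs => rw [h1, h2]
  rw [Measure.restrict_singleton, Measure.restrict_singleton, mix, h3, ofReal_measureReal]

/-- truncated cost integrand -/
noncomputable def trc (p : ℝ) (c c' : Qs) (s : ℝ) (x : Qs) : ℝ :=
  min (dist x c ^ p - s) (dist x c' ^ p)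

lemma trc_cont {p : ℝ} (hp : 1 < p) (c c' : Qs) (s : ℝ) : Continuous (trc p c c' s) :=
  ((cont_costc hp c).sub continuous_const).min (cont_costc hp c')

lemma cont_int {f : Qs → ℝ} (hf : Continuous f) (μ : Measure Qs) [IsFiniteMeasure μ] :
    Integrable f μ := by
  obtain ⟨C, hC⟩ := isCompact_univ.exists_bound_of_continuousOn (f := f) hf.continuousOn
  exact int_bdd μ hf.measurable C fun x => hC x (Set.mem_univ _)

lemma trc_lower {p : ℝ} (hp : 1 < p) {c c' : Qs} (hc : c ≠ c') (μ : Measure Qs)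
    [IsProbabilityMeasure μ] (s : ℝ) {t : ℝ} (h0 : 0 ≤ t) (h1 : t ≤ 1) :
    ∫ x, trc p c c' s x ∂μ + s * t ≤ Wdist p μ (mix t c c') ^ p := by
  classical
  haveI := mix_prob h0 h1 c c'
  refine le_wd hp fun π h => ?_
  haveI := h.prob
  have hI1 : Integrable (fun q : Qs × Qs => trc p c c' s q.1) π := by
    have := cont_int (trc_cont hp c c' s) (π.map Prod.fst)
    exact this.comp_measurable measurable_fst
  let e : Qs → ℝ := fun y => if y = c then s else 0
  have he : Measurable e := Measurable.ite (measurableSet_singleton c) measurable_const measurable_const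
  have hI2 : Integrable (fun q : Qs × Qs => e q.2) π := by
    refine int_bdd π (he.comp measurable_snd) |s| fun q => ?_
    simp only [e]; split_ifs <;> simp
  have e1 : ∫ q, trc p c c' s q.1 ∂π = ∫ x, trc p c c' s x ∂μ := by
    rw [← h.1, integral_map measurable_fst.aemeasurable
      (trc_cont hp c c' s).measurable.aestronglyMeasurable]
  have e2 : ∫ q, e q.2 ∂π = s * t := by
    have : ∫ q, e q.2 ∂π = ∫ y, e y ∂(π.map Prod.snd) := by
      rw [integral_map measurable_snd.aemeasurable he.aestronglyMeasurable]
    rw [this, h.2, mix_integral h0 h1]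
    simp [e, hc.symm, mul_comm]
  rw [← e1, ← e2, ← integral_add hI1 hI2]
  have h2 : ∀ᵐ q ∂π, q.2 = c ∨ q.2 = c' := by
    have : ∀ᵐ y ∂(π.map Prod.snd), y = c ∨ y = c' := by rw [h.2]; exact mix_ae _ _ _
    exact ae_of_ae_map measurable_snd.aemeasurable this
  refine integral_mono_ae (hI1.add hI2) (int_cost hp π) ?_
  filter_upwards [h2] with q hq
  rcases hq with hq | hq
  · simp only [e, trc, hq, if_true]
    linarith [min_le_left (dist q.1 c ^ p - s) (dist q.1 c' ^ p)]
  · simp only [e, trc, hq, if_neg hc.symm]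
    linarith [min_le_right (dist q.1 c ^ p - s) (dist q.1 c' ^ p)]

open Classical in
lemma map_two (μ : Measure Qs) {A : Set Qs} (hA : MeasurableSet A) (c c' : Qs) :
    μ.map (fun x => if x ∈ A then c else c') =
      μ A • Measure.dirac c + μ Aᶜ • Measure.dirac c' := by
  have hS : Measurable (fun x => if x ∈ A then c else c') :=
    Measurable.ite hA measurable_const measurable_const
  ext B hB
  rw [Measure.map_apply hS hB]
  simp only [Measure.coe_add, Measure.coe_smul, Pi.add_apply, Pi.smul_apply, smul_eq_mul,
        Measure.dirac_apply' _ hB]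
  by_cases hb : c ∈ B <;> by_cases hb' : c' ∈ B <;>
    simp only [hb, hb', not_false_eq_true, Set.indicator_of_mem, Set.indicator_of_notMem,
      Pi.one_apply, mul_one, mul_zero, add_zero, zero_add]
  · rw [measure_add_measure_compl hA]
    congr 1; ext x; by_cases hx : x ∈ A <;> simp [hx, hb, hb']
  · congr 1; ext x; by_cases hx : x ∈ A <;> simp [hx, hb, hb']
  · congr 1; ext x; by_cases hx : x ∈ A <;> simp [hx, hb, hb']
  · rw [← measure_empty (μ := μ)]
    congr 1; ext x; by_cases hx : x ∈ A <;> simp [hx, hb, hb']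

lemma trc_upper {p : ℝ} (hp : 1 < p) {c c' : Qs} (μ : Measure Qs)
    [IsProbabilityMeasure μ] (s : ℝ) : ∃ t : ℝ, 0 ≤ t ∧ t ≤ 1 ∧
     Wdist p μ (mix t c c') ^ p ≤ ∫ x, trc p c c' s x ∂μ + s * t := by
  classical
  let A : Set Qs := {x | dist x c ^ p - s < dist x c' ^ p}
  have hA : MeasurableSet A := (isOpen_lt ((cont_costc hp c).sub continuous_const)
    (cont_costc hp c')).measurableSet
  refine ⟨μ.real A, measureReal_nonneg, measureReal_le_one, ?_⟩
  let S : Qs → Qs := fun x => if x ∈ A then c else c'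
  have hS : Measurable S := Measurable.ite hA measurable_const measurable_const
  have hg : Measurable fun x => (x, S x) := measurable_id.prodMk hS
  have hcp : IsCpl (μ.map fun x => (x, S x)) μ (mix (μ.real A) c c') := by
    constructor
    · rw [Measure.map_map measurable_fst hg]
      exact Measure.map_id
    · rw [Measure.map_map measurable_snd hg]
      change μ.map S = _
      rw [mix, ← probReal_compl_eq_one_sub hA, ofReal_measureReal, ofReal_measureReal]
      exact map_two μ hA c c'
  refine (wd_le hp hcp).trans_eq ?_
  rw [integral_map hg.aemeasurable (cont_cost hp).measurable.aestronglyMeasurable]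
  have e2 : s * μ.real A = ∫ x, A.indicator (fun _ => s) x ∂μ := by
    rw [integral_indicator_const _ hA]; simp [mul_comm]
  rw [e2, ← integral_add (cont_int (trc_cont hp c c' s) μ) ((integrable_const s).indicator hA)]
  congr 1
  ext x
  by_cases hx : x ∈ A
  · have : dist x c ^ p - s < dist x c' ^ p := hx
    simp only [S, hx, if_true, Set.indicator_of_mem, trc, min_eq_left this.le]
    ring
  · have : dist x c' ^ p ≤ dist x c ^ p - s := not_lt.1 hx
    simp only [S, hx, if_false, Set.indicator_of_notMem, not_false_eq_true, trc, min_eq_right this]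
    ring

/-- difference of costs -/
noncomputable def kk (p : ℝ) (c c' : Qs) (x : Qs) : ℝ := dist x c ^ p - dist x c' ^ p

lemma kk_cont {p : ℝ} (hp : 1 < p) (c c' : Qs) : Continuous (kk p c c') :=
  (cont_costc hp c).sub (cont_costc hp c')

lemma law_le {μ ν : Measure Qs} [IsProbabilityMeasure μ] [IsProbabilityMeasure ν] {k : Qs → ℝ}
    (hk : Continuous k) (h : ∀ s, ∫ x, max (s - k x) 0 ∂μ = ∫ x, max (s - k x) 0 ∂ν) :
    μ.map k = ν.map k := by
  haveI : IsProbabilityMeasure (μ.map k) :=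
    Measure.isProbabilityMeasure_map hk.measurable.aemeasurable
  have hci : ∀ s, Continuous fun x => max (s - k x) 0 := fun s =>
    (continuous_const.sub hk).max continuous_const
  have key : ∀ (s : ℝ) (m : Measure Qs) [IsProbabilityMeasure m],
      Filter.Tendsto (fun n : ℕ => ((n : ℝ) + 1) * (∫ x, max (s - k x) 0 ∂m
        - ∫ x, max (s - 1 / ((n : ℝ) + 1) - k x) 0 ∂m)) Filter.atTop
        (nhds (m.real {x | k x < s})) := by
    intro s m _
    have hms : MeasurableSet {x | k x < s} := (isOpen_lt hk continuous_const).measurableSet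
    have e : m.real {x | k x < s} = ∫ x, ({x | k x < s}.indicator (fun _ => (1 : ℝ))) x ∂m := by
      rw [integral_indicator_const _ hms]; simp
    rw [e]
    simp_rw [← integral_sub (cont_int (hci _) m) (cont_int (hci _) m), ← integral_const_mul]
    refine tendsto_integral_of_dominated_convergence (fun _ => 1) ?_ (integrable_const _) ?_ ?_
    · intro n
      exact (continuous_const.mul ((hci _).sub (hci _))).measurable.aestronglyMeasurable
    · intro n
      refine Filter.Eventually.of_forall fun x => ?_
      have hn : (0 : ℝ) < (n : ℝ) + 1 := by positivity
      have hn' : (0 : ℝ) < 1 / ((n : ℝ) + 1) := by positivity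
      rw [Real.norm_eq_abs, abs_mul, abs_of_pos hn]
      have : |max (s - k x) 0 - max (s - 1 / ((n : ℝ) + 1) - k x) 0| ≤ 1 / ((n : ℝ) + 1) := by
        rw [abs_le]
        generalize 1 / ((n : ℝ) + 1) = d at hn'
        rcases max_cases (s - k x) 0 with h1 | h1 <;>
        rcases max_cases (s - d - k x) 0 with h2 | h2 <;> constructor <;> linarith
      calc _ ≤ ((n : ℝ) + 1) * (1 / ((n : ℝ) + 1)) := by gcongr
        _ = 1 := by field_simp
    · refine Filter.Eventually.of_forall fun x => ?_
      by_cases hx : k x < s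
      · rw [Set.indicator_of_mem (show x ∈ {x | k x < s} from hx)]
        refine tendsto_const_nhds.congr' ?_
        have h3 : ∀ᶠ n : ℕ in Filter.atTop, 1 / ((n : ℝ) + 1) < s - k x :=
          (tendsto_one_div_add_atTop_nhds_zero_nat (𝕜 := ℝ)).eventually_lt_const (by linarith)
        filter_upwards [h3] with n hn
        rw [max_eq_left (by linarith), max_eq_left (by linarith)]
        have : (0 : ℝ) < (n : ℝ) + 1 := by positivity
        field_simp
        ring
      · rw [Set.indicator_of_notMem (show x ∉ {x | k x < s} from hx)]
        refine tendsto_const_nhds.congr fun n => ?_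
        have hn' : (0 : ℝ) < 1 / ((n : ℝ) + 1) := by positivity
        rw [max_eq_right (by linarith), max_eq_right (by linarith)]
        simp
  apply Measure.ext_of_Ici
  intro s
  rw [Measure.map_apply hk.measurable measurableSet_Ici,
    Measure.map_apply hk.measurable measurableSet_Ici]
  have hms : MeasurableSet {x | k x < s} := (isOpen_lt hk continuous_const).measurableSet
  have e : k ⁻¹' Set.Ici s = {x | k x < s}ᶜ := by ext x; simp
  have h1 := key s μ
  simp_rw [h] at h1
  have h2 := tendsto_nhds_unique h1 (key s ν)
  rw [e, prob_compl_eq_one_sub hms, prob_compl_eq_one_sub hms, ← ofReal_measureReal, h2,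
    ofReal_measureReal]

lemma law_kk {p : ℝ} (hp : 1 < p) {c c' : Qs} (hc : c ≠ c') {μ ν : Measure Qs}
    [IsProbabilityMeasure μ] [IsProbabilityMeasure ν]
    (h : ∀ t, 0 ≤ t → t ≤ 1 → Wdist p μ (mix t c c') = Wdist p ν (mix t c c')) :
    μ.map (kk p c c') = ν.map (kk p c c') := by
  have hM : ∀ s, ∫ x, trc p c c' s x ∂μ = ∫ x, trc p c c' s x ∂ν := by
    intro s
    apply le_antisymm
    · obtain ⟨t, h0, h1, h2⟩ := trc_upper hp (c := c) (c' := c') ν s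
      have := trc_lower hp hc μ s h0 h1
      rw [h t h0 h1] at this
      linarith
    · obtain ⟨t, h0, h1, h2⟩ := trc_upper hp (c := c) (c' := c') μ s
      have := trc_lower hp hc ν s h0 h1
      rw [← h t h0 h1] at this
      linarith
  have e : ∀ s x, trc p c c' s x = dist x c' ^ p - max (s - kk p c c' x) 0 := by
    intro s x
    simp only [trc, kk]
    rcases le_total (dist x c ^ p - s) (dist x c' ^ p) with h | h
    · rw [min_eq_left h, max_eq_left (by linarith)]; ring
    · rw [min_eq_right h, max_eq_right (by linarith)]; ring
  have hci : ∀ s, Continuous fun x => max (s - kk p c c' x) 0 := fun s =>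
    (continuous_const.sub (kk_cont hp c c')).max continuous_const
  have e2 : ∀ (m : Measure Qs) [IsProbabilityMeasure m] (s : ℝ), ∫ x, trc p c c' s x ∂m =
      ∫ x, dist x c' ^ p ∂m - ∫ x, max (s - kk p c c' x) 0 ∂m := by
    intro m _ s
    rw [← integral_sub (int_costc hp c' m) (cont_int (hci s) m)]
    simp_rw [e]
  have e3 : ∫ x, dist x c' ^ p ∂μ = ∫ x, dist x c' ^ p ∂ν := by
    have h1 := hM (-(2 ^ p))
    rw [e2, e2] at h1
    have h2 : ∀ x, max (-(2 ^ p) - kk p c c' x) 0 = 0 := by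
      intro x
      have h3 := rpow_bd hp (dist_nonneg (x := x) (y := c')) (qs_dist_le x c')
      have h4 : 0 ≤ dist x c ^ p := Real.rpow_nonneg dist_nonneg _
      apply max_eq_right
      simp only [kk]
      linarith
    simpa [h2] using h1
  refine law_le (kk_cont hp c c') fun s => ?_
  have h1 := hM s
  rw [e2, e2, e3] at h1
  linarith

lemma eq_of_law {μ ν : Measure Qs} {k : Qs → ℝ}
    (hk : Continuous k) {L : Set Qs} (hL : MeasurableSet L) (hinj : Set.InjOn k L)
    (hμ : ∀ᵐ x ∂μ, x ∈ L) (hν : ∀ᵐ x ∂ν, x ∈ L) (h : μ.map k = ν.map k) : μ = ν := by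
  have key : ∀ (m : Measure Qs) (A : Set Qs), (∀ᵐ x ∂m, x ∈ L) → MeasurableSet A →
      m A = m.map k (k '' (A ∩ L)) := by
    intro m A hm hA
    have hi : MeasurableSet (k '' (A ∩ L)) := (hA.inter hL).image_of_continuousOn_injOn
      hk.continuousOn (hinj.mono Set.inter_subset_right)
    rw [Measure.map_apply hk.measurable hi]
    apply measure_congr
    filter_upwards [hm] with x hx
    apply propext
    change x ∈ A ↔ k x ∈ k '' (A ∩ L)
    constructor
    · intro h; exact ⟨x, ⟨h, hx⟩, rfl⟩
    · rintro ⟨y, ⟨hy, hyL⟩, hxy⟩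
      rwa [← hinj hyL hx hxy]
  ext A hA
  rw [key μ A hμ hA, key ν A hν hA, h]

/-- a measure on `L` is determined by distances to two-point mixtures -/
lemma eq_of_dist {p : ℝ} (hp : 1 < p) {c c' d d' : Qs} (hc : c ≠ c') (hd : d ≠ d')
    {L : Set Qs} (hL : MeasurableSet L) (h1 : ∀ x, dist x c = dist x c' ↔ x ∈ L)
    (h2 : ∀ x ∈ L, dist x d' = 2 - dist x d)
    (h3 : ∀ x ∈ L, ∀ y ∈ L, dist x d = dist y d → x = y)
    {μ ν : Measure Qs} [IsProbabilityMeasure μ] [IsProbabilityMeasure ν]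
    (hμ : ∀ᵐ x ∂μ, x ∈ L)
    (w1 : ∀ t, 0 ≤ t → t ≤ 1 → Wdist p μ (mix t c c') = Wdist p ν (mix t c c'))
    (w2 : ∀ t, 0 ≤ t → t ≤ 1 → Wdist p μ (mix t d d') = Wdist p ν (mix t d d')) : μ = ν := by
  have hz : ∀ x, kk p c c' x = 0 ↔ x ∈ L := by
    intro x
    rw [← h1, kk, sub_eq_zero]
    exact ⟨fun h => rpow_inj2 hp dist_nonneg dist_nonneg h, fun h => by rw [h]⟩
  have hν : ∀ᵐ x ∂ν, x ∈ L := by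
    have l1 := law_kk hp hc w1
    have l2 : ∀ᵐ r ∂(μ.map (kk p c c')), r = 0 := by
      refine (ae_map_iff (kk_cont hp c c').measurable.aemeasurable (measurableSet_singleton 0)).2 ?_
      filter_upwards [hμ] with x hx
      exact (hz x).2 hx
    rw [l1] at l2
    filter_upwards [ae_of_ae_map (kk_cont hp c c').measurable.aemeasurable l2] with x hx
    exact (hz x).1 hx
  refine eq_of_law (kk_cont hp d d') hL ?_ hμ hν (law_kk hp hd w2)
  intro x hx y hy hxy
  refine h3 x hx y hy ?_
  simp only [kk, h2 x hx, h2 y hy] at hxy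
  have hx2 := qs_dist_le x d
  have hy2 := qs_dist_le y d
  rcases lt_trichotomy (dist x d) (dist y d) with h | h | h
  · have a := Real.rpow_lt_rpow dist_nonneg h (by linarith : 0 < p)
    have b := Real.rpow_lt_rpow (by linarith) (by linarith : 2 - dist y d < 2 - dist x d) (by linarith : 0 < p)
    linarith
  · exact h
  · have a := Real.rpow_lt_rpow dist_nonneg h (by linarith : 0 < p)
    have b := Real.rpow_lt_rpow (by linarith) (by linarith : 2 - dist x d < 2 - dist y d) (by linarith : 0 < p)
    linarith

lemma dist_two_iff (x y : Qs) : dist x y = 2 ↔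
    (x.1.1 = 1 ∧ y.1.1 = -1) ∨ (x.1.1 = -1 ∧ y.1.1 = 1) ∨
    (x.1.2 = 1 ∧ y.1.2 = -1) ∨ (x.1.2 = -1 ∧ y.1.2 = 1) := by
  rw [qs_dist_def]
  obtain ⟨⟨hx1, hx2⟩, hx3, hx4⟩ := qs_bd x
  obtain ⟨⟨hy1, hy2⟩, hy3, hy4⟩ := qs_bd y
  constructor
  · intro h
    rcases max_choice |x.1.1 - y.1.1| |x.1.2 - y.1.2| with h' | h' <;> rw [h'] at h <;>
      rcases abs_choice (x.1.1 - y.1.1) with h1 | h1 <;>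
      rcases abs_choice (x.1.2 - y.1.2) with h2 | h2 <;> grind
  · intro h
    apply le_antisymm
    · exact max_le (abs_le.2 ⟨by linarith, by linarith⟩) (abs_le.2 ⟨by linarith, by linarith⟩)
    · rcases h with ⟨h1, h2⟩ | ⟨h1, h2⟩ | ⟨h1, h2⟩ | ⟨h1, h2⟩
      · exact le_max_of_le_left (by rw [h1, h2]; norm_num)
      · exact le_max_of_le_left (by rw [h1, h2]; norm_num)
      · exact le_max_of_le_right (by rw [h1, h2]; norm_num)
      · exact le_max_of_le_right (by rw [h1, h2]; norm_num)

def sgn (x : ℝ) : Prop := x = 1 ∨ x = -1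

lemma three_sep {b c d : ℝ} (h1 : (b = 1 ∧ c = -1) ∨ (b = -1 ∧ c = 1))
    (h2 : (b = 1 ∧ d = -1) ∨ (b = -1 ∧ d = 1)) (h3 : (c = 1 ∧ d = -1) ∨ (c = -1 ∧ d = 1)) :
    False := by
  rcases h1 with ⟨a1, a2⟩ | ⟨a1, a2⟩ <;> rcases h2 with ⟨a3, a4⟩ | ⟨a3, a4⟩ <;>
    rcases h3 with ⟨a5, a6⟩ | ⟨a5, a6⟩ <;> linarith

lemma four_coord1 {a b c d : Qs} (hab : dist a b = 2) (hac : dist a c = 2) (had : dist a d = 2)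
    (hbc : dist b c = 2) (hbd : dist b d = 2) (hcd : dist c d = 2) : sgn a.1.1 := by
  rw [dist_two_iff] at *
  by_contra h
  simp only [sgn, not_or] at h
  simp only [h.1, h.2, false_and, false_or] at hab hac had
  rcases hab with ⟨h1, h2⟩ | ⟨h1, h2⟩
  · norm_num [h1] at hac had
    norm_num [h2, hac] at hbc
    norm_num [h2, had] at hbd
    norm_num [hac, had] at hcd
    exact three_sep hbc hbd hcd
  · norm_num [h1] at hac had
    norm_num [h2, hac] at hbc
    norm_num [h2, had] at hbd
    norm_num [hac, had] at hcd
    exact three_sep hbc hbd hcd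

lemma four_coord2 {a b c d : Qs} (hab : dist a b = 2) (hac : dist a c = 2) (had : dist a d = 2)
    (hbc : dist b c = 2) (hbd : dist b d = 2) (hcd : dist c d = 2) : sgn a.1.2 := by
  rw [dist_two_iff] at *
  by_contra h
  simp only [sgn, not_or] at h
  simp only [h.1, h.2, false_and, false_or, or_false] at hab hac had
  rcases hab with ⟨h1, h2⟩ | ⟨h1, h2⟩
  · norm_num [h1] at hac had
    norm_num [h2, hac] at hbc
    norm_num [h2, had] at hbd
    norm_num [hac, had] at hcd
    exact three_sep hbc hbd hcd
  · norm_num [h1] at hac had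
    norm_num [h2, hac] at hbc
    norm_num [h2, had] at hbd
    norm_num [hac, had] at hcd
    exact three_sep hbc hbd hcd

lemma four_coord {x : Fin 4 → Qs} (h : ∀ i j, i ≠ j → dist (x i) (x j) = 2) (i : Fin 4) :
    sgn (x i).1.1 ∧ sgn (x i).1.2 := by
  have : ∃ j k l : Fin 4, i ≠ j ∧ i ≠ k ∧ i ≠ l ∧ j ≠ k ∧ j ≠ l ∧ k ≠ l := by
    revert i; decide
  obtain ⟨j, k, l, h1, h2, h3, h4, h5, h6⟩ := this
  exact ⟨four_coord1 (h _ _ h1) (h _ _ h2) (h _ _ h3) (h _ _ h4) (h _ _ h5) (h _ _ h6),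
    four_coord2 (h _ _ h1) (h _ _ h2) (h _ _ h3) (h _ _ h4) (h _ _ h5) (h _ _ h6)⟩

lemma qs_ext {x y : Qs} (h1 : x.1.1 = y.1.1) (h2 : x.1.2 = y.1.2) : x = y :=
  Subtype.ext (Prod.ext h1 h2)

/-- four points pairwise at distance two are all the corners -/
lemma four_uniq {x : Fin 4 → Qs} (h : ∀ i j, i ≠ j → dist (x i) (x j) = 2) (i : Fin 4) (y : Qs)
    (hy : ∀ j, i ≠ j → dist y (x j) = 2) : y = x i := by
  classical
  have hy' : ∀ k j, k ≠ j → dist (Function.update x i y k) (Function.update x i y j) = 2 := by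
    intro k j hkj
    by_cases hk : k = i
    · subst hk
      rw [Function.update_self, Function.update_of_ne hkj.symm]
      exact hy j hkj
    · by_cases hj : j = i
      · subst hj
        rw [Function.update_self, Function.update_of_ne hkj, dist_comm]
        exact hy k (Ne.symm hkj)
      · rw [Function.update_of_ne hk, Function.update_of_ne hj]
        exact h k j hkj
  have c0 : sgn y.1.1 ∧ sgn y.1.2 := by
    have := four_coord hy' i
    rwa [Function.update_self] at this
  let F : Qs → Bool × Bool := fun z => (decide (z.1.1 = 1), decide (z.1.2 = 1))
  have hF : ∀ z w : Qs, sgn z.1.1 ∧ sgn z.1.2 → sgn w.1.1 ∧ sgn w.1.2 → F z = F w → z = w := by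
    intro z w hz hw hzw
    simp only [F, Prod.mk.injEq, decide_eq_decide, sgn] at hzw hz hw
    apply qs_ext <;> grind
  have hinj : Function.Injective (F ∘ x) := by
    intro k j hkj
    by_contra hne
    have := h k j hne
    rw [hF _ _ (four_coord h k) (four_coord h j) hkj, dist_self] at this
    norm_num at this
  have hbij : Function.Bijective (F ∘ x) :=
    (Fintype.bijective_iff_injective_and_card _).2 ⟨hinj, by simp⟩
  obtain ⟨j, hj⟩ := hbij.2 (F y)
  have hyj := hF _ _ (four_coord h j) c0 hj
  by_cases hij : i = j
  · rw [hij, hyj]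
  · have := hy j hij
    rw [hyj, dist_self] at this
    norm_num at this

lemma eq_dirac {μ : Measure Qs} [IsProbabilityMeasure μ] {c : Qs} (h : ∀ᵐ x ∂μ, x = c) :
    μ = Measure.dirac c := by
  have : μ.map id = μ.map (fun _ => c) := Measure.map_congr h
  rw [Measure.map_id, Measure.map_const] at this
  simpa using this

lemma four_dirac {p : ℝ} (hp : 1 < p) (μ : Fin 4 → Measure Qs) (hμ : ∀ i, IsProbabilityMeasure (μ i))
    (h : ∀ i j, i ≠ j → Wdist p (μ i) (μ j) = 2) :
    ∃ x : Fin 4 → Qs, ∀ i, μ i = Measure.dirac (x i) := by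
  have hs : ∀ i, (μ i).support.Nonempty := fun i =>
    Measure.nonempty_support (IsProbabilityMeasure.ne_zero _)
  choose x hx using hs
  have hxx : ∀ i j, i ≠ j → dist (x i) (x j) = 2 := fun i j hij =>
    supp_of_two hp (h i j hij) (hx i) (hx j)
  refine ⟨x, fun i => eq_dirac ?_⟩
  filter_upwards [Measure.support_mem_ae (μ := μ i)] with y hy
  exact four_uniq hxx i y fun j hij => supp_of_two hp (h i j hij) hy (hx j)

def cpp : Qs := ⟨(1, 1), by simp [Prod.le_def]⟩
def cmm : Qs := ⟨(-1, -1), by simp [Prod.le_def]⟩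
def cpm : Qs := ⟨(1, -1), by simp [Prod.le_def]⟩
def cmp1 : Qs := ⟨(-1, 1), by simp [Prod.le_def]⟩

lemma opp_cases {c d : Qs} (h : dist c d = 2) (hc : sgn c.1.1 ∧ sgn c.1.2)
    (hd : sgn d.1.1 ∧ sgn d.1.2) : (c.1.1 = d.1.1 ∧ d.1.2 = - c.1.2) ∨
      (c.1.2 = d.1.2 ∧ d.1.1 = - c.1.1) ∨ (d.1.1 = - c.1.1 ∧ d.1.2 = - c.1.2) := by
  rw [dist_two_iff] at h
  obtain ⟨c1 | c1, c2 | c2⟩ := hc <;> obtain ⟨d1 | d1, d2 | d2⟩ := hd <;>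
    (try norm_num [c1, c2, d1, d2] at h) <;> norm_num [c1, c2, d1, d2]

/-- measures at distance two from two opposite corners live on the other two corners -/
lemma ae_other {p : ℝ} (hp : 1 < p) {N : Measure Qs} [IsProbabilityMeasure N] {d d' c c' : Qs}
    (hg : ∀ x, dist x d = 2 → dist x d' = 2 → x = c ∨ x = c')
    (h1 : Wdist p N (Measure.dirac d) = 2) (h2 : Wdist p N (Measure.dirac d') = 2) :
    ∀ᵐ x ∂N, x = c ∨ x = c' := by
  filter_upwards [ae_of_two hp h1, ae_of_two hp h2] with x a b
  exact hg x a b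

lemma no_mid {p : ℝ} (hp : 1 < p) {N : Measure Qs} [IsProbabilityMeasure N] {c c' : Qs}
    (hcc : dist c c' = 2) (h : ∀ᵐ x ∂N, x = c ∨ x = c')
    (h1 : Wdist p N (Measure.dirac c) = 1) (h2 : Wdist p N (Measure.dirac c') = 1) : False := by
  have e1 := wd_dirac hp N c
  have e2 := wd_dirac hp N c'
  rw [h1, Real.one_rpow] at e1
  rw [h2, Real.one_rpow] at e2
  have h3 : ∫ x, (dist x c ^ p + dist x c' ^ p) ∂N = ∫ x, (2 : ℝ) ^ p ∂N := by
    apply integral_congr_ae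
    have hp0 : p ≠ 0 := by linarith
    filter_upwards [h] with x hx
    rcases hx with rfl | rfl
    · simp [hcc, Real.zero_rpow hp0]
    · simp [dist_comm x, hcc, Real.zero_rpow hp0]
  rw [integral_add (int_costc hp _ _) (int_costc hp _ _), ← e1, ← e2] at h3
  have h4 : (2 : ℝ) ^ (1 : ℝ) < 2 ^ p := Real.rpow_lt_rpow_of_exponent_lt (by norm_num) hp
  simp at h3 h4
  linarith

/-- an isometry sends a mixture to a mixture with the same weights -/
lemma mix_image {p : ℝ} (hp : 1 < p) {Φ : Measure Qs → Measure Qs} (hΦ : IsWIsometry Qs p Φ)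
    {a a' b b' c c' d d' : Qs} (hcc : dist c c' = 2) (haa : dist a a' = 2)
    (hab : dist a b = 2) (hab' : dist a b' = 2) (ha'b : dist a' b = 2) (ha'b' : dist a' b' = 2)
    (hg : ∀ x, dist x d = 2 → dist x d' = 2 → x = c ∨ x = c')
    (ic : Φ (Measure.dirac a) = Measure.dirac c)
    (id1 : Φ (Measure.dirac b) = Measure.dirac d) (id2 : Φ (Measure.dirac b') = Measure.dirac d')
    {t : ℝ} (h0 : 0 ≤ t) (h1 : t ≤ 1) : Φ (mix t a a') = mix t c c' := by
  have := mix_prob h0 h1 a a'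
  have hp0 : p ≠ 0 := by linarith
  have hN : IsProbabilityMeasure (Φ (mix t a a')) := (hΦ.1.1 (mem_wset hp _)).1
  have hne : c ≠ c' := by
    rintro rfl
    simp at hcc
  have W1 : ∀ b d : Qs, Φ (Measure.dirac b) = Measure.dirac d →
      Wdist p (Φ (mix t a a')) (Measure.dirac d) ^ p
        = t * dist a b ^ p + (1 - t) * dist a' b ^ p := by
    intro b d hbd
    rw [← hbd, hΦ.2 _ (mem_wset hp _) _ (mem_wset hp _), wd_dirac hp, mix_integral h0 h1]
  have W2 : ∀ b d : Qs, Φ (Measure.dirac b) = Measure.dirac d → dist a b = 2 → dist a' b = 2 →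
      Wdist p (Φ (mix t a a')) (Measure.dirac d) = 2 := by
    intro b d hbd h2 h3
    refine rpow_inj2 hp (wd_nonneg _ _ _) (by norm_num) ?_
    rw [W1 b d hbd, h2, h3]; ring
  have hae := ae_other hp hg (W2 b d id1 hab ha'b) (W2 b' d' id2 hab' ha'b')
  have e := eq_mix hne hae
  have e1 := W1 a c ic
  set s := (Φ (mix t a a')).real {c} with hs
  have hs0 : 0 ≤ s := measureReal_nonneg
  have hs1 : s ≤ 1 := measureReal_le_one
  rw [wd_dirac hp, e, mix_integral hs0 hs1, dist_self, dist_self, dist_comm c' c, hcc,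
    dist_comm a' a, haa, Real.zero_rpow hp0] at e1
  have h2p : (2 : ℝ) ^ p ≠ 0 := by positivity
  have : s = t := by
    have : (s - t) * (2 : ℝ) ^ p = 0 := by linarith
    rcases mul_eq_zero.1 this with h | h
    · linarith
    · exact absurd h h2p
  rw [e, this]

lemma exists_T {u v : ℝ} (hu : sgn u) (hv : sgn v) (sw : Bool) : ∃ T : Qs → Qs, IsIsom T ∧
    ∀ x, (T x).1 = if sw then (u * x.1.2, v * x.1.1) else (u * x.1.1, v * x.1.2) := by
  have hb : ∀ w : ℝ, sgn w → ∀ r : ℝ, -1 ≤ r ∧ r ≤ 1 → -1 ≤ w * r ∧ w * r ≤ 1 := by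
    rintro w (rfl | rfl) r ⟨h1, h2⟩ <;> constructor <;> linarith
  have ha : ∀ w : ℝ, sgn w → ∀ r s : ℝ, |w * r - w * s| = |r - s| := by
    rintro w (rfl | rfl) r s
    · simp
    · rw [abs_sub_comm]; congr 1; ring
  have hw : ∀ w : ℝ, sgn w → ∀ r : ℝ, w * (w * r) = r := by
    rintro w (rfl | rfl) r <;> ring
  cases sw
  · let T : Qs → Qs := fun x => ⟨(u * x.1.1, v * x.1.2),
      ⟨(hb u hu _ (qs_bd x).1).1, (hb v hv _ (qs_bd x).2).1⟩,
      ⟨(hb u hu _ (qs_bd x).1).2, (hb v hv _ (qs_bd x).2).2⟩⟩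
    refine ⟨T, ⟨Function.Involutive.bijective fun x => ?_, fun x y => ?_⟩, fun x => rfl⟩
    · exact qs_ext (hw u hu _) (hw v hv _)
    · rw [qs_dist_def, qs_dist_def]
      simp only [T]
      rw [ha u hu, ha v hv]
  · let T : Qs → Qs := fun x => ⟨(u * x.1.2, v * x.1.1),
      ⟨(hb u hu _ (qs_bd x).2).1, (hb v hv _ (qs_bd x).1).1⟩,
      ⟨(hb u hu _ (qs_bd x).2).2, (hb v hv _ (qs_bd x).1).2⟩⟩
    let S : Qs → Qs := fun x => ⟨(v * x.1.2, u * x.1.1),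
      ⟨(hb v hv _ (qs_bd x).2).1, (hb u hu _ (qs_bd x).1).1⟩,
      ⟨(hb v hv _ (qs_bd x).2).2, (hb u hu _ (qs_bd x).1).2⟩⟩
    refine ⟨T, ⟨Function.bijective_iff_has_inverse.2 ⟨S, fun x => ?_, fun x => ?_⟩, fun x y => ?_⟩,
      fun x => rfl⟩
    · exact qs_ext (hw v hv _) (hw u hu _)
    · exact qs_ext (hw u hu _) (hw v hv _)
    · rw [qs_dist_def, qs_dist_def]
      simp only [T]
      rw [ha u hu, ha v hv, max_comm]

lemma ae_of_msupport {μ : Measure Qs} {L : Set Qs} (h : msupport μ ⊆ L) : ∀ᵐ x ∂μ, x ∈ L := by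
  filter_upwards [Measure.support_mem_ae (μ := μ)] with x hx
  apply h
  intro U hU hxU
  exact ((Measure.mem_support_iff_forall x).1 hx U (hU.mem_nhds hxU)).ne'

lemma mid_aux {p : ℝ} (hp : 1 < p) {Φ : Measure Qs → Measure Qs} (hΦ : IsWIsometry Qs p Φ)
    {a a' b b' c c' d d' : Qs} (hcc : dist c c' = 2)
    (hg : ∀ x, dist x d = 2 → dist x d' = 2 → x = c ∨ x = c')
    (ia : Φ (Measure.dirac a) = Measure.dirac c) (ia' : Φ (Measure.dirac a') = Measure.dirac c')
    (ib : Φ (Measure.dirac b) = Measure.dirac d) (ib' : Φ (Measure.dirac b') = Measure.dirac d')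
    (m : Qs) (h1 : dist m a = 1) (h2 : dist m a' = 1) (h3 : dist m b = 2) (h4 : dist m b' = 2) :
    False := by
  have hN : IsProbabilityMeasure (Φ (Measure.dirac m)) := (hΦ.1.1 (mem_wset hp _)).1
  have W : ∀ b d : Qs, Φ (Measure.dirac b) = Measure.dirac d →
      Wdist p (Φ (Measure.dirac m)) (Measure.dirac d) = dist m b := by
    intro b d hbd
    rw [← hbd, hΦ.2 _ (mem_wset hp _) _ (mem_wset hp _), wd_dirac_dirac hp]
  exact no_mid hp hcc (ae_other hp hg ((W b d ib).trans h3) ((W b' d' ib').trans h4))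
    ((W a c ia).trans h1) ((W a' c' ia').trans h2)

lemma antip {p : ℝ} (hp : 1 < p) {Φ : Measure Qs → Measure Qs} (hΦ : IsWIsometry Qs p Φ)
    {a a' b b' c c' d d' : Qs} (hcc : dist c c' = 2)
    (hg : ∀ x, dist x d = 2 → dist x d' = 2 → x = c ∨ x = c')
    (ia : Φ (Measure.dirac a) = Measure.dirac c) (ia' : Φ (Measure.dirac a') = Measure.dirac c')
    (ib : Φ (Measure.dirac b) = Measure.dirac d) (ib' : Φ (Measure.dirac b') = Measure.dirac d')
    (sa : sgn a.1.1 ∧ sgn a.1.2) (sa' : sgn a'.1.1 ∧ sgn a'.1.2)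
    (sb : sgn b.1.1 ∧ sgn b.1.2) (sb' : sgn b'.1.1 ∧ sgn b'.1.2)
    (haa : dist a a' = 2)
    (hab : dist a b = 2) (hab' : dist a b' = 2) (ha'b : dist a' b = 2) (ha'b' : dist a' b' = 2) :
    a'.1.1 = - a.1.1 ∧ a'.1.2 = - a.1.2 := by
  have n1 : ∀ w : ℝ, sgn w → w ≠ -w := by
    rintro w (rfl | rfl) <;> norm_num
  have n2 : ∀ w : ℝ, sgn w → |w| = 1 := by
    rintro w (rfl | rfl) <;> norm_num
  have n3 : ∀ w : ℝ, sgn w → -1 ≤ w ∧ w ≤ 1 := by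
    rintro w (rfl | rfl) <;> norm_num
  have n4 : ∀ w : ℝ, sgn w → |w - -w| = 2 := by
    rintro w (rfl | rfl) <;> norm_num
  have n5 : ∀ w : ℝ, sgn w → |-w| = 1 := by
    rintro w (rfl | rfl) <;> norm_num
  rcases opp_cases haa sa sa' with ⟨h1, h2⟩ | ⟨h1, h2⟩ | h
  · exfalso
    have hb : ∀ b : Qs, sgn b.1.1 ∧ sgn b.1.2 → dist a b = 2 → dist a' b = 2 →
        b.1.1 = - a.1.1 := by
      intro b sb hab ha'b
      rcases opp_cases hab sa sb with ⟨g1, g2⟩ | ⟨g1, g2⟩ | ⟨g1, g2⟩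
      · exfalso
        have : a' = b := qs_ext (by rw [← h1, g1]) (by rw [h2, g2])
        rw [this, dist_self] at ha'b
        norm_num at ha'b
      · exact g2
      · exact g1
    have e1 := hb b sb hab ha'b
    have e2 := hb b' sb' hab' ha'b'
    let m : Qs := ⟨(a.1.1, 0), ⟨(n3 _ sa.1).1, by norm_num⟩, ⟨(n3 _ sa.1).2, by norm_num⟩⟩
    refine mid_aux hp hΦ hcc hg ia ia' ib ib' m ?_ ?_ ?_ ?_
    · rw [qs_dist_def]; simp [m, n2 _ sa.2]
    · rw [qs_dist_def]; simp [m, h1, n2 _ sa'.2]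
    · rw [qs_dist_def]; simp only [m, e1, n4 _ sa.1, zero_sub, n5 _ sb.2]; norm_num
    · rw [qs_dist_def]; simp only [m, e2, n4 _ sa.1, zero_sub, n5 _ sb'.2]; norm_num
  · exfalso
    have hb : ∀ b : Qs, sgn b.1.1 ∧ sgn b.1.2 → dist a b = 2 → dist a' b = 2 →
        b.1.2 = - a.1.2 := by
      intro b sb hab ha'b
      rcases opp_cases hab sa sb with ⟨g1, g2⟩ | ⟨g1, g2⟩ | ⟨g1, g2⟩
      · exact g2
      · exfalso
        have : a' = b := qs_ext (by rw [h2, g2]) (by rw [← h1, g1])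
        rw [this, dist_self] at ha'b
        norm_num at ha'b
      · exact g2
    have e1 := hb b sb hab ha'b
    have e2 := hb b' sb' hab' ha'b'
    let m : Qs := ⟨(0, a.1.2), ⟨by norm_num, (n3 _ sa.2).1⟩, ⟨by norm_num, (n3 _ sa.2).2⟩⟩
    refine mid_aux hp hΦ hcc hg ia ia' ib ib' m ?_ ?_ ?_ ?_
    · rw [qs_dist_def]; simp [m, n2 _ sa.1]
    · rw [qs_dist_def]; simp [m, h1, n2 _ sa'.1]
    · rw [qs_dist_def]; simp only [m, e1, n4 _ sa.2, zero_sub, n5 _ sb.1]; norm_num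
    · rw [qs_dist_def]; simp only [m, e2, n4 _ sa.2, zero_sub, n5 _ sb'.1]; norm_num
  · exact h

lemma hg1 (x : Qs) (h1 : dist x cpm = 2) (h2 : dist x cmp1 = 2) : x = cpp ∨ x = cmm := by
  rw [dist_two_iff] at h1 h2
  norm_num [cpm, cmp1] at h1 h2
  rcases h1 with h1 | h1 <;> rcases h2 with h2 | h2
  · linarith
  · exact Or.inr (qs_ext h1 h2)
  · exact Or.inl (qs_ext h2 h1)
  · linarith

lemma hg2 (x : Qs) (h1 : dist x cpp = 2) (h2 : dist x cmm = 2) : x = cpm ∨ x = cmp1 := by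
  rw [dist_two_iff] at h1 h2
  norm_num [cpp, cmm] at h1 h2
  rcases h1 with h1 | h1 <;> rcases h2 with h2 | h2
  · linarith
  · exact Or.inr (qs_ext h1 h2)
  · exact Or.inl (qs_ext h2 h1)
  · linarith

lemma dist_corner (x : Qs) : dist x cpp = max (1 - x.1.1) (1 - x.1.2) ∧
    dist x cmm = max (1 + x.1.1) (1 + x.1.2) ∧ dist x cpm = max (1 - x.1.1) (1 + x.1.2) ∧
    dist x cmp1 = max (1 + x.1.1) (1 - x.1.2) := by
  obtain ⟨⟨hx1, hx2⟩, hx3, hx4⟩ := qs_bd x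
  have e1 : |x.1.1 - 1| = 1 - x.1.1 := by rw [abs_of_nonpos] <;> linarith
  have e2 : |x.1.2 - 1| = 1 - x.1.2 := by rw [abs_of_nonpos] <;> linarith
  have e3 : |x.1.1 - -1| = 1 + x.1.1 := by rw [abs_of_nonneg] <;> linarith
  have e4 : |x.1.2 - -1| = 1 + x.1.2 := by rw [abs_of_nonneg] <;> linarith
  refine ⟨?_, ?_, ?_, ?_⟩ <;> rw [qs_dist_def] <;> simp only [cpp, cmm, cpm, cmp1, e1, e2, e3, e4]

lemma max_aux1 {a b : ℝ} : max (1 - a) (1 + b) = max (1 + a) (1 - b) ↔ b = a := by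
  constructor
  · intro h
    rcases max_cases (1 - a) (1 + b) with ⟨h1, h2⟩ | ⟨h1, h2⟩ <;>
    rcases max_cases (1 + a) (1 - b) with ⟨h3, h4⟩ | ⟨h3, h4⟩ <;> linarith
  · rintro rfl
    exact max_comm _ _

lemma max_aux2 {a b : ℝ} : max (1 - a) (1 - b) = max (1 + a) (1 + b) ↔ b = -a := by
  constructor
  · intro h
    rcases max_cases (1 - a) (1 - b) with ⟨h1, h2⟩ | ⟨h1, h2⟩ <;>
    rcases max_cases (1 + a) (1 + b) with ⟨h3, h4⟩ | ⟨h3, h4⟩ <;> linarith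
  · rintro rfl
    rw [max_comm]; congr 1; ring

lemma meas_LplusQ : MeasurableSet LplusQ :=
  (isClosed_eq (continuous_snd.comp continuous_subtype_val)
    (continuous_fst.comp continuous_subtype_val)).measurableSet

lemma meas_LminusQ : MeasurableSet LminusQ :=
  (isClosed_eq (continuous_snd.comp continuous_subtype_val)
    (continuous_fst.comp continuous_subtype_val).neg).measurableSet

lemma final_plus {p : ℝ} (hp : 1 < p) {μ ν : Measure Qs} [IsProbabilityMeasure μ]
    [IsProbabilityMeasure ν] (hμ : ∀ᵐ x ∂μ, x ∈ LplusQ)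
    (w1 : ∀ t, 0 ≤ t → t ≤ 1 → Wdist p μ (mix t cpm cmp1) = Wdist p ν (mix t cpm cmp1))
    (w2 : ∀ t, 0 ≤ t → t ≤ 1 → Wdist p μ (mix t cpp cmm) = Wdist p ν (mix t cpp cmm)) : μ = ν := by
  refine eq_of_dist hp (fun h => ?_) (fun h => ?_) meas_LplusQ (fun x => ?_) (fun x hx => ?_)
    (fun x hx y hy h => ?_) hμ w1 w2
  · have := congrArg (fun z : Qs => z.1.1) h; norm_num [cpm, cmp1] at this
  · have := congrArg (fun z : Qs => z.1.1) h; norm_num [cpp, cmm] at this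
  · rw [(dist_corner x).2.2.1, (dist_corner x).2.2.2, max_aux1]; rfl
  · have hx' : x.1.2 = x.1.1 := hx
    rw [(dist_corner x).1, (dist_corner x).2.1, hx', max_self, max_self]; ring
  · have hx' : x.1.2 = x.1.1 := hx
    have hy' : y.1.2 = y.1.1 := hy
    rw [(dist_corner x).1, (dist_corner y).1, hx', hy', max_self, max_self] at h
    apply qs_ext <;> linarith

lemma final_minus {p : ℝ} (hp : 1 < p) {μ ν : Measure Qs} [IsProbabilityMeasure μ]
    [IsProbabilityMeasure ν] (hμ : ∀ᵐ x ∂μ, x ∈ LminusQ)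
    (w1 : ∀ t, 0 ≤ t → t ≤ 1 → Wdist p μ (mix t cpm cmp1) = Wdist p ν (mix t cpm cmp1))
    (w2 : ∀ t, 0 ≤ t → t ≤ 1 → Wdist p μ (mix t cpp cmm) = Wdist p ν (mix t cpp cmm)) : μ = ν := by
  refine eq_of_dist hp (fun h => ?_) (fun h => ?_) meas_LminusQ (fun x => ?_) (fun x hx => ?_)
    (fun x hx y hy h => ?_) hμ w2 w1
  · have := congrArg (fun z : Qs => z.1.1) h; norm_num [cpp, cmm] at this
  · have := congrArg (fun z : Qs => z.1.1) h; norm_num [cpm, cmp1] at this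
  · rw [(dist_corner x).1, (dist_corner x).2.1, max_aux2]; rfl
  · have hx' : x.1.2 = -x.1.1 := hx
    rw [(dist_corner x).2.2.1, (dist_corner x).2.2.2, hx', ← sub_eq_add_neg, max_self,
      sub_neg_eq_add, max_self]; ring
  · have hx' : x.1.2 = -x.1.1 := hx
    have hy' : y.1.2 = -y.1.1 := hy
    rw [(dist_corner x).2.2.1, (dist_corner y).2.2.1, hx', hy', ← sub_eq_add_neg,
      ← sub_eq_add_neg, max_self, max_self] at h
    apply qs_ext <;> linarith

lemma map_mix (T : Qs → Qs) (hT : Measurable T) (t : ℝ) (c c' : Qs) :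
    (mix t c c').map T = mix t (T c) (T c') := by
  rw [mix, Measure.map_add _ _ hT, Measure.map_smul, Measure.map_smul, Measure.map_dirac' hT,
    Measure.map_dirac' hT, mix]

lemma wd_map {p : ℝ} (hp : 1 < p) (μ ν : Measure Qs) [IsProbabilityMeasure μ]
    [IsProbabilityMeasure ν] (T : Qs → Qs) (hT : IsIsom T) :
    Wdist p (μ.map T) (ν.map T) = Wdist p μ ν := by
  have hi : Isometry T := Isometry.of_dist_eq hT.2
  obtain ⟨S, h1, h2⟩ := Function.bijective_iff_has_inverse.1 hT.1
  have hS : Isometry S := Isometry.of_dist_eq fun x y => by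
    rw [← hT.2, h2, h2]
  have mT := hi.continuous.measurable
  have mS := hS.continuous.measurable
  have i1 : IsProbabilityMeasure (μ.map T) := Measure.isProbabilityMeasure_map mT.aemeasurable
  have i2 : IsProbabilityMeasure (ν.map T) := Measure.isProbabilityMeasure_map mT.aemeasurable
  have e : ∀ m : Measure Qs, (m.map T).map S = m := fun m => by
    rw [Measure.map_map mS mT, h1.comp_eq_id, Measure.map_id]
  apply rpow_inj2 hp (wd_nonneg _ _ _) (wd_nonneg _ _ _)
  apply le_antisymm (wd_map_le hp μ ν T hi)
  have := wd_map_le hp (μ.map T) (ν.map T) S hS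
  rwa [e, e] at this

lemma exists_corner_T {p : ℝ} (hp : 1 < p) {Φ : Measure Qs → Measure Qs}
    (hΦ : IsWIsometry Qs p Φ) : ∃ T : Qs → Qs, IsIsom T ∧
      Φ (Measure.dirac (T cpp)) = Measure.dirac cpp ∧
      Φ (Measure.dirac (T cmm)) = Measure.dirac cmm ∧
      Φ (Measure.dirac (T cpm)) = Measure.dirac cpm ∧
      Φ (Measure.dirac (T cmp1)) = Measure.dirac cmp1 := by
  let C : Fin 4 → Qs := ![cpp, cmm, cpm, cmp1]
  have hC : ∀ i j, i ≠ j → dist (C i) (C j) = 2 := by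
    intro i j hij
    rw [dist_two_iff]
    fin_cases i <;> fin_cases j <;> simp [C, cpp, cmm, cpm, cmp1] at hij ⊢
  have hsurj : ∀ i, ∃ m ∈ WSet Qs p, Φ m = Measure.dirac (C i) := fun i =>
    hΦ.1.2.2 (mem_wset hp _)
  choose m hm hmi using hsurj
  obtain ⟨x, hx⟩ := four_dirac hp m (fun i => (hm i).1) (fun i j hij => by
    rw [← hΦ.2 _ (hm i) _ (hm j), hmi, hmi, wd_dirac_dirac hp, hC i j hij])
  have hxi : ∀ i, Φ (Measure.dirac (x i)) = Measure.dirac (C i) := fun i => by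
    rw [← hx, hmi]
  have hxx : ∀ i j, i ≠ j → dist (x i) (x j) = 2 := fun i j hij => by
    rw [← wd_dirac_dirac hp, ← hΦ.2 _ (mem_wset hp _) _ (mem_wset hp _), hxi, hxi,
      wd_dirac_dirac hp, hC i j hij]
  have hs := four_coord hxx
  have A1 := antip hp hΦ (hC 0 1 (by decide)) hg1 (hxi 0) (hxi 1) (hxi 2) (hxi 3) (hs 0) (hs 1)
    (hs 2) (hs 3) (hxx 0 1 (by decide)) (hxx 0 2 (by decide)) (hxx 0 3 (by decide))
    (hxx 1 2 (by decide)) (hxx 1 3 (by decide))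
  have A2 := antip hp hΦ (hC 2 3 (by decide)) hg2 (hxi 2) (hxi 3) (hxi 0) (hxi 1) (hs 2) (hs 3)
    (hs 0) (hs 1) (hxx 2 3 (by decide)) (hxx 2 0 (by decide)) (hxx 2 1 (by decide))
    (hxx 3 0 (by decide)) (hxx 3 1 (by decide))
  suffices ∃ T : Qs → Qs, IsIsom T ∧ T cpp = x 0 ∧ T cmm = x 1 ∧ T cpm = x 2 ∧ T cmp1 = x 3 by
    obtain ⟨T, hT, h0, h1, h2, h3⟩ := this
    refine ⟨T, hT, ?_, ?_, ?_, ?_⟩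
    · rw [h0]; exact hxi 0
    · rw [h1]; exact hxi 1
    · rw [h2]; exact hxi 2
    · rw [h3]; exact hxi 3
  rcases opp_cases (hxx 0 2 (by decide)) (hs 0) (hs 2) with ⟨g1, g2⟩ | ⟨g1, g2⟩ | ⟨g1, g2⟩
  · obtain ⟨T, hT, hTx⟩ := exists_T (hs 0).1 (hs 0).2 false
    refine ⟨T, hT, ?_, ?_, ?_, ?_⟩ <;> apply qs_ext <;> rw [hTx] <;>
      simp [cpp, cmm, cpm, cmp1, A1, A2, g1, g2]
  · obtain ⟨T, hT, hTx⟩ := exists_T (hs 0).1 (hs 0).2 true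
    refine ⟨T, hT, ?_, ?_, ?_, ?_⟩ <;> apply qs_ext <;> rw [hTx] <;>
      simp [cpp, cmm, cpm, cmp1, A1, A2, g1, g2]
  · exfalso
    have e : x 1 = x 2 := qs_ext (by rw [A1.1, g1]) (by rw [A1.2, g2])
    have := hxx 1 2 (by decide)
    rw [e, dist_self] at this
    norm_num at this

end Helpers

/-- Diagonal rigidity of `𝒲_p(Q, d_m)` for all `p > 1`: every isometry, composed with
the push-forward of a suitable isometry of `Q`, fixes all measures supported on `L₊` or
`L₋`. -/
theorem Wp_Q_diagonally_rigid (p : ℝ) (hp : 1 < p)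
    (Φ : Measure ↥Qs → Measure ↥Qs) (hΦ : IsWIsometry ↥Qs p Φ) :
    ∃ T : ↥Qs → ↥Qs, IsIsom T ∧ ∀ μ ∈ WSet ↥Qs p,
      (msupport μ ⊆ LplusQ ∨ msupport μ ⊆ LminusQ) → Φ (μ.map T) = μ := by
  obtain ⟨T, hT, i1, i2, i3, i4⟩ := exists_corner_T hp hΦ
  refine ⟨T, hT, ?_⟩
  intro μ hμW hμ
  have hi : Isometry T := Isometry.of_dist_eq hT.2
  have mT := hi.continuous.measurable
  have p0 : IsProbabilityMeasure μ := hμW.1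
  have p1 : IsProbabilityMeasure (μ.map T) := Measure.isProbabilityMeasure_map mT.aemeasurable
  have p2 : IsProbabilityMeasure (Φ (μ.map T)) := (hΦ.1.1 (mem_wset hp _)).1
  have D : dist cpp cmm = 2 ∧ dist cpm cmp1 = 2 ∧ dist cpp cpm = 2 ∧ dist cpp cmp1 = 2 ∧
      dist cmm cpm = 2 ∧ dist cmm cmp1 = 2 := by
    simp [dist_two_iff, cpp, cmm, cpm, cmp1]
  obtain ⟨d1, d2, d3, d4, d5, d6⟩ := D
  have key : ∀ c c' t, 0 ≤ t → t ≤ 1 → Φ (mix t (T c) (T c')) = mix t c c' →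
      Wdist p μ (mix t c c') = Wdist p (Φ (μ.map T)) (mix t c c') := by
    intro c c' t h0 h1 h
    have q1 := mix_prob h0 h1 c c'
    have q2 := mix_prob h0 h1 (T c) (T c')
    conv_rhs => rw [← h]
    rw [hΦ.2 _ (mem_wset hp _) _ (mem_wset hp _), ← map_mix T mT, wd_map hp _ _ T hT]
  have w2 : ∀ t, 0 ≤ t → t ≤ 1 →
      Wdist p μ (mix t cpp cmm) = Wdist p (Φ (μ.map T)) (mix t cpp cmm) := fun t h0 h1 =>
    key _ _ t h0 h1 (mix_image hp hΦ d1 (by rwa [hT.2]) (by rwa [hT.2]) (by rwa [hT.2])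
      (by rwa [hT.2]) (by rwa [hT.2]) hg1 i1 i3 i4 h0 h1)
  have w1 : ∀ t, 0 ≤ t → t ≤ 1 →
      Wdist p μ (mix t cpm cmp1) = Wdist p (Φ (μ.map T)) (mix t cpm cmp1) := fun t h0 h1 =>
    key _ _ t h0 h1 (mix_image hp hΦ d2 (by rwa [hT.2]) (by rwa [hT.2, dist_comm])
      (by rwa [hT.2, dist_comm]) (by rwa [hT.2, dist_comm]) (by rwa [hT.2, dist_comm])
      hg2 i3 i1 i2 h0 h1)
  rcases hμ with h | h
  · exact (final_plus hp (ae_of_msupport h) w1 w2).symm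
  · exact (final_minus hp (ae_of_msupport h) w1 w2).symm
end
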